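/- arXiv:1305.6221 — 2 statements merged into one kernel-verified Lean document; each statement's English description precedes it below -/
import Mathlib

section
/- Kahane's convexity inequalities: Let (Ω,F,P) be a probability space, n ≥ 1, and let (A_1,…,A_n) and (B_1,…,B_n) be centered Gaussian vectors (i.e. every finite linear combination Σ_i c_i A_i is a centered Gaussian random variable, and likewise for B) such that E[A_i A_j] ≤ E[B_i B_j] for all 1 ≤ i,j ≤ n. Then for all nonnegative weights p_1,…,p_n and every convex function F : [0,∞) → ℝ of at most polynomial growth at infinity (there exist C, N with |F(x)| ≤ C(1+x^N) for all x ≥ 0), one has E[F(Σ_{i=1}^n p_i e^{A_i − ½E[A_i²]})] ≤ E[F(Σ_{i=1}^n p_i e^{B_i − ½E[B_i²]})]; if instead F is concave of at most polynomial growth, the reverse inequality E[F(Σ p_i e^{A_i − ½E[A_i²]})] ≥ E[F(Σ p_i e^{B_i − ½E[B_i²]})] holds. -/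
open MeasureTheory ProbabilityTheory Filter

noncomputable section

/-- A real random variable is a centered Gaussian if its law is `gaussianReal 0 v`
for some variance `v ≥ 0`. -/
def IsCenteredGaussian {Ω : Type*} [MeasurableSpace Ω] (P : Measure Ω) (Z : Ω → ℝ) : Prop :=
  ∃ v : NNReal, Measure.map Z P = gaussianReal 0 v

/-- A family of real random variables is a centered Gaussian family (vector/process) if every
finite linear combination of its members is a centered Gaussian random variable. -/
def IsCenteredGaussianFamily {Ω : Type*} [MeasurableSpace Ω] (P : Measure Ω)
    {ι : Type*} (Y : ι → Ω → ℝ) : Prop :=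
  ∀ (m : ℕ) (idx : Fin m → ι) (c : Fin m → ℝ),
    IsCenteredGaussian P (fun ω => ∑ i, c i * Y (idx i) ω)

/-!
Write `W F S p` for the expectation of `F (∑ p i * exp (X i - S i i / 2))` when `X` is a centered
Gaussian vector with covariance `S`. For small `S` and smooth `F`, a second-order Taylor expansion
at the mean `m = ∑ p i` gives
`W F S p = F m + F'' m / 2 * (∑ p i * p j * exp (S i j) - m ^ 2) + O(|S| ^ (3/2))`,
whose main part is increasing in the entries of `S` when `F'' ≥ 0`.

For general `A ≤ B`, realize both Gaussian vectors as sums of `N` independent vectors with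
covariances `A / N` and `B / N`, and replace the summands one at a time. Conditionally on the other
summands a replacement only changes the weights `p i` by positive factors, so it increases the
expectation up to an error `O(N ^ (-3/2))`; the `N` errors add up to `O(N ^ (-1/2))`, which vanishes
in the limit. This is a discrete substitute for Gaussian interpolation.

Smoothness is removed in two steps: a Lipschitz convex function is a uniform limit of its iterated
Steklov means, and a convex function on `[0, ∞)` is on `(0, ∞)` an increasing limit of maxima of
finitely many affine functions.
-/

open scoped NNReal Matrix RealInnerProductSpace

section Calculus

lemma abs_sub_le_mul_pow_succ_of_abs_deriv_le {f f' : ℝ → ℝ} {K : ℝ≥0} {x : ℝ} {k : ℕ}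
    (hf : ∀ t, HasDerivAt f (f' t) t) (hf' : ∀ t, |f' t| ≤ K * |t - x| ^ k) (y : ℝ) :
    |f y - f x| ≤ K * |y - x| ^ (k + 1) := by
  have abs_sub_le_of_mem_segment (t : ℝ) (ht : t ∈ segment ℝ x y) : |t - x| ≤ |y - x| := by
    rw [segment_eq_uIcc] at ht
    exact Set.abs_sub_left_of_mem_uIcc ht
  have mean_value := (convex_segment (𝕜 := ℝ) x y).norm_image_sub_le_of_norm_hasDerivWithin_le
    (C := K * |y - x| ^ k) (fun t _ => (hf t).hasDerivWithinAt)
    (fun t ht => (hf' t).trans (mul_le_mul_of_nonneg_left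
      (pow_le_pow_left₀ (abs_nonneg _) (abs_sub_le_of_mem_segment t ht) k) K.2))
    (left_mem_segment ℝ x y) (right_mem_segment ℝ x y)
  simpa only [Real.norm_eq_abs, pow_succ, mul_assoc] using mean_value

/-- The test functions of the replacement argument: `G` is Lipschitz and convex, with derivatives
`G'` and `G''`, the second of which is Lipschitz. The derivatives are parameters because
`isSmoothConvex_steklovMean` produces them explicitly, as difference quotients. -/
structure IsSmoothConvex (L K : ℝ≥0) (G G' G'' : ℝ → ℝ) : Prop where
  lipschitzWith : LipschitzWith L G
  hasDerivAt : ∀ x, HasDerivAt G (G' x) x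
  hasDerivAt_deriv : ∀ x, HasDerivAt G' (G'' x) x
  second_deriv_nonneg : ∀ x, 0 ≤ G'' x
  lipschitzWith_second_deriv : LipschitzWith K G''

lemma IsSmoothConvex.abs_taylor_remainder_le {L K : ℝ≥0} {G G' G'' : ℝ → ℝ}
    (hG : IsSmoothConvex L K G G' G'') (x y : ℝ) :
    |G y - G x - G' x * (y - x) - G'' x / 2 * (y - x) ^ 2| ≤ K * |y - x| ^ 3 := by
  have deriv_remainder (t : ℝ) : |G' t - G' x - G'' x * (t - x)| ≤ K * |t - x| ^ 2 := by
    have key := abs_sub_le_mul_pow_succ_of_abs_deriv_le (k := 1) (x := x)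
      (fun t => (hG.hasDerivAt_deriv t).sub (((hasDerivAt_id t).sub_const x).const_mul (G'' x)))
      (fun t => by
        simpa [Real.dist_eq] using hG.lipschitzWith_second_deriv.dist_le_mul t x) t
    convert key using 2
    simp only [Pi.sub_apply, id]
    ring
  have remainder_deriv (t : ℝ) :
      HasDerivAt (fun t => G t - G' x * (t - x) - G'' x / 2 * (t - x) ^ 2)
        (G' t - G' x - G'' x * (t - x)) t := by
    have hsub := (hasDerivAt_id t).sub_const x
    refine (((hG.hasDerivAt t).sub (hsub.const_mul (G' x))).sub
      ((hsub.pow 2).const_mul (G'' x / 2))).congr_deriv ?_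
    simp only [id]
    ring
  convert abs_sub_le_mul_pow_succ_of_abs_deriv_le remainder_deriv deriv_remainder y using 2
  ring

/-- The forward difference quotient of `f` with step `δ`. -/
def diffQuotient (δ : ℝ) (f : ℝ → ℝ) (x : ℝ) : ℝ := δ⁻¹ * (f (x + δ) - f x)

lemma hasDerivAt_diffQuotient {f f' : ℝ → ℝ} (hf : ∀ x, HasDerivAt f (f' x) x) (δ x : ℝ) :
    HasDerivAt (diffQuotient δ f) (diffQuotient δ f' x) x :=
  (((hf (x + δ)).comp_add_const x δ).sub (hf x)).const_mul δ⁻¹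

lemma abs_diffQuotient_le {f : ℝ → ℝ} {L : ℝ≥0} (hf : LipschitzWith L f) (δ x : ℝ) :
    |diffQuotient δ f x| ≤ L := by
  have h := hf.dist_le_mul (x + δ) x
  rw [Real.dist_eq, Real.dist_eq, add_sub_cancel_left] at h
  rw [diffQuotient, abs_mul, abs_inv, mul_comm, ← div_eq_mul_inv]
  exact div_le_of_le_mul₀ (abs_nonneg δ) L.2 h

lemma lipschitzWith_diffQuotient {f : ℝ → ℝ} {L : ℝ≥0} (hf : LipschitzWith L f) (δ : ℝ) :
    LipschitzWith (‖δ⁻¹‖₊ * (L + L)) (diffQuotient δ f) := by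
  have hshift : LipschitzWith L fun x => f (x + δ) := by
    simpa [Function.comp_def] using hf.comp (isometry_add_right δ).lipschitz
  exact (lipschitzWith_smul δ⁻¹).comp (hshift.sub hf)

lemma diffQuotient_diffQuotient_nonneg {f : ℝ → ℝ} (hf : ConvexOn ℝ Set.univ f) (δ x : ℝ) :
    0 ≤ diffQuotient δ (diffQuotient δ f) x := by
  have midpoint := hf.2 (Set.mem_univ (x + δ + δ)) (Set.mem_univ x)
    (show (0 : ℝ) ≤ 1 / 2 by norm_num) (show (0 : ℝ) ≤ 1 / 2 by norm_num) (by norm_num)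
  simp only [smul_eq_mul] at midpoint
  rw [show 1 / 2 * (x + δ + δ) + 1 / 2 * x = x + δ by ring] at midpoint
  have eq : diffQuotient δ (diffQuotient δ f) x =
      δ⁻¹ ^ 2 * (f (x + δ + δ) - 2 * f (x + δ) + f x) := by
    simp only [diffQuotient]
    ring
  rw [eq]
  exact mul_nonneg (sq_nonneg _) (by linarith)

/-- The mean value of `f` over `[x, x + δ]`, a regularization of `f` that gains one derivative. -/
def steklovMean (δ : ℝ) (f : ℝ → ℝ) (x : ℝ) : ℝ := δ⁻¹ * ∫ t in x..x + δ, f t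

lemma hasDerivAt_steklovMean {f : ℝ → ℝ} (hf : Continuous f) (δ x : ℝ) :
    HasDerivAt (steklovMean δ f) (diffQuotient δ f x) x := by
  have hprim (y : ℝ) : HasDerivAt (fun u => ∫ t in (0 : ℝ)..u, f t) (f y) y :=
    (hf.integral_hasStrictDerivAt 0 y).hasDerivAt
  refine (hasDerivAt_diffQuotient hprim δ x).congr_of_eventuallyEq (.of_forall fun y => ?_)
  simp only [steklovMean, diffQuotient, intervalIntegral.integral_interval_sub_left
    (hf.intervalIntegrable _ _) (hf.intervalIntegrable _ _)]

lemma lipschitzWith_steklovMean {f : ℝ → ℝ} {L : ℝ≥0} (hf : LipschitzWith L f) (δ : ℝ) :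
    LipschitzWith L (steklovMean δ f) :=
  lipschitzWith_of_nnnorm_deriv_le
    (fun x => (hasDerivAt_steklovMean hf.continuous δ x).differentiableAt) fun x => by
      rw [(hasDerivAt_steklovMean hf.continuous δ x).deriv]
      exact abs_diffQuotient_le hf δ x

lemma abs_steklovMean_sub_le {f : ℝ → ℝ} {L : ℝ≥0} (hf : LipschitzWith L f) {δ : ℝ} (hδ : 0 < δ)
    (x : ℝ) : |steklovMean δ f x - f x| ≤ L * δ := by
  have eq : steklovMean δ f x - f x = δ⁻¹ * ∫ t in x..x + δ, (f t - f x) := by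
    rw [intervalIntegral.integral_sub (hf.continuous.intervalIntegrable _ _) (by simp),
      intervalIntegral.integral_const, add_sub_cancel_left, steklovMean, smul_eq_mul]
    field_simp
  have bound : ‖∫ t in x..x + δ, (f t - f x)‖ ≤ L * δ * |x + δ - x| := by
    refine intervalIntegral.norm_integral_le_of_norm_le_const fun t ht => ?_
    rw [Set.uIoc_of_le (by linarith)] at ht
    refine (hf.dist_le_mul t x).trans (mul_le_mul_of_nonneg_left ?_ L.2)
    rw [Real.dist_eq, abs_of_pos (sub_pos.2 ht.1)]
    linarith [ht.2]
  rw [Real.norm_eq_abs, add_sub_cancel_left, abs_of_pos hδ] at bound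
  rw [eq, abs_mul, abs_of_pos (inv_pos.2 hδ), inv_mul_le_iff₀ hδ]
  linarith

lemma isSmoothConvex_steklovMean {G : ℝ → ℝ} {L : ℝ≥0} (hG : LipschitzWith L G)
    (hconv : ConvexOn ℝ Set.univ G) (δ : ℝ) :
    IsSmoothConvex L (‖δ⁻¹‖₊ * (‖δ⁻¹‖₊ * (L + L) + ‖δ⁻¹‖₊ * (L + L)))
      (steklovMean δ (steklovMean δ G)) (diffQuotient δ (steklovMean δ G))
      (diffQuotient δ (diffQuotient δ G)) where
  lipschitzWith := lipschitzWith_steklovMean (lipschitzWith_steklovMean hG δ) δ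
  hasDerivAt := hasDerivAt_steklovMean (lipschitzWith_steklovMean hG δ).continuous δ
  hasDerivAt_deriv := hasDerivAt_diffQuotient (hasDerivAt_steklovMean hG.continuous δ) δ
  second_deriv_nonneg := diffQuotient_diffQuotient_nonneg hconv δ
  lipschitzWith_second_deriv := lipschitzWith_diffQuotient (lipschitzWith_diffQuotient hG δ) δ

lemma exists_isSmoothConvex_abs_sub_le {G : ℝ → ℝ} {L : ℝ≥0} (hG : LipschitzWith L G)
    (hconv : ConvexOn ℝ Set.univ G) {ε : ℝ} (hε : 0 < ε) :
    ∃ K H H' H'', IsSmoothConvex L K H H' H'' ∧ ∀ x, |H x - G x| ≤ ε := by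
  obtain ⟨δ, hδ, hδε⟩ : ∃ δ > 0, 2 * (L : ℝ) * δ < ε := exists_pos_mul_lt hε _
  refine ⟨_, _, _, _, isSmoothConvex_steklovMean hG hconv δ, fun x => ?_⟩
  calc |steklovMean δ (steklovMean δ G) x - G x|
      ≤ |steklovMean δ (steklovMean δ G) x - steklovMean δ G x| + |steklovMean δ G x - G x| :=
        abs_sub_le _ _ _
    _ ≤ L * δ + L * δ := add_le_add
        (abs_steklovMean_sub_le (lipschitzWith_steklovMean hG δ) hδ x)
        (abs_steklovMean_sub_le hG hδ x)
    _ ≤ ε := by linarith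

end Calculus

section AffineMinorants

variable {s : Set ℝ} {F : ℝ → ℝ}

lemma exists_affine_minorant (hF : ConvexOn ℝ s F) {x : ℝ} (hx : x ∈ interior s) :
    ∃ c, ∀ y ∈ s, F x + c * (y - x) ≤ F y := by
  refine ⟨derivWithin F (Set.Ioi x) x, fun y hy => ?_⟩
  rcases lt_trichotomy y x with hyx | rfl | hxy
  · have hslope := (hF.slope_le_leftDeriv_of_mem_interior hy hx hyx).trans
      (hF.leftDeriv_le_rightDeriv_of_mem_interior hx)
    rw [slope_def_field, div_le_iff₀ (sub_pos.2 hyx)] at hslope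
    linarith
  · simp
  · have hslope := hF.rightDeriv_le_slope_of_mem_interior hx hy hxy
    rw [slope_def_field, le_div_iff₀ (sub_pos.2 hxy)] at hslope
    linarith

lemma exists_seq_affine_isLUB (hF : ConvexOn ℝ s F) (hs : (interior s).Nonempty) :
    ∃ a b : ℕ → ℝ, ∀ x ∈ interior s, IsLUB (Set.range fun k => a k * x + b k) (F x) := by
  let affine (c : ℝ × ℝ) (x : interior s) : ℝ := c.1 * x + c.2
  let minorants : Set (interior s → ℝ) := {l | (∃ c, affine c = l) ∧ ∀ x, l x ≤ F x}
  have isLUB_minorants : IsLUB minorants fun x => F x := by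
    refine ⟨fun l hl => hl.2, fun g hg x => ?_⟩
    obtain ⟨c, hc⟩ := exists_affine_minorant hF x.2
    have := hg (a := affine (c, F x - c * x)) ⟨⟨_, rfl⟩, fun y => ?_⟩ x
    · simpa [affine] using this
    · have := hc y (interior_subset y.2)
      simp only [affine]
      linarith
  obtain ⟨countableMinorants, hsub, hcount, hlub⟩ := exists_countable_lowerSemicontinuous_isLUB
    (fun l hl => by
      obtain ⟨c, rfl⟩ := hl.1
      exact (by fun_prop : Continuous (affine c)).lowerSemicontinuous) isLUB_minorants
  have : Nonempty (interior s) := hs.to_subtype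
  obtain ⟨l, rfl⟩ := hcount.exists_eq_range hlub.nonempty
  choose c hc using fun k => (hsub (Set.mem_range_self k)).1
  refine ⟨fun k => (c k).1, fun k => (c k).2, fun x hx => ?_⟩
  have range_eq : (Set.range fun k => (c k).1 * x + (c k).2) =
      Function.eval ⟨x, hx⟩ '' Set.range l := by
    rw [← Set.range_comp]
    exact congrArg Set.range (funext fun k => congrFun (hc k) ⟨x, hx⟩)
  exact range_eq ▸ isLUB_pi.1 hlub ⟨x, hx⟩

lemma convexOn_partialSups {E : Type*} [AddCommGroup E] [Module ℝ E] {s : Set E}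
    {f : ℕ → E → ℝ} (hf : ∀ k, ConvexOn ℝ s (f k)) (k : ℕ) :
    ConvexOn ℝ s (partialSups f k) := by
  rw [partialSups_apply]
  exact Finset.sup'_induction _ _ (fun _ hg _ hh => hg.sup hh) fun i _ => hf i

lemma exists_lipschitzWith_partialSups {α : Type*} [PseudoEMetricSpace α] {f : ℕ → α → ℝ}
    (hf : ∀ k, ∃ L, LipschitzWith L (f k)) (k : ℕ) : ∃ L, LipschitzWith L (partialSups f k) := by
  rw [partialSups_apply]
  exact Finset.sup'_induction (p := fun g => ∃ L, LipschitzWith L g) _ _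
    (fun _ ⟨_, hg⟩ _ ⟨_, hh⟩ => ⟨_, hg.max hh⟩) fun i _ => hf i

lemma tendsto_partialSups_apply {α : Type*} {f : ℕ → α → ℝ} {x : α} {y : ℝ}
    (h : IsLUB (Set.range fun k => f k x) y) :
    Tendsto (fun k => partialSups f k x) atTop (nhds y) := by
  simp only [Pi.partialSups_apply]
  refine tendsto_atTop_isLUB (partialSups_monotone _) ?_
  rwa [IsLUB, upperBounds_range_partialSups]

lemma exists_monotone_seq_convexOn_lipschitzWith (hF : ConvexOn ℝ s F)
    (hs : (interior s).Nonempty) :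
    ∃ G : ℕ → ℝ → ℝ, Monotone G ∧ (∀ k, ConvexOn ℝ Set.univ (G k)) ∧
      (∀ k, ∃ L, LipschitzWith L (G k)) ∧
      ∀ x ∈ interior s, Tendsto (fun k => G k x) atTop (nhds (F x)) := by
  obtain ⟨a, b, hlub⟩ := exists_seq_affine_isLUB hF hs
  have convexOn_affine (k : ℕ) : ConvexOn ℝ Set.univ fun x => a k * x + b k :=
    ((LinearMap.mulLeft ℝ (a k)).convexOn convex_univ).add_const (b k)
  have lipschitzWith_affine (k : ℕ) : LipschitzWith ‖a k‖₊ fun x => a k * x + b k := by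
    simpa [Function.comp_def] using
      (isometry_add_right (b k)).lipschitz.comp (lipschitzWith_smul (β := ℝ) (a k))
  exact ⟨partialSups fun k x => a k * x + b k, partialSups_monotone _,
    convexOn_partialSups convexOn_affine,
    exists_lipschitzWith_partialSups fun k => ⟨_, lipschitzWith_affine k⟩,
    fun x hx => tendsto_partialSups_apply (hlub x hx)⟩

end AffineMinorants

section GaussianMeasure

variable {ι : Type*} [Fintype ι] [DecidableEq ι] {S R : Matrix ι ι ℝ}

lemma map_inner_multivariateGaussian (hS : S.PosSemidef) (c : EuclideanSpace ℝ ι) :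
    (multivariateGaussian 0 S).map (fun x => ⟪c, x⟫) =
      gaussianReal 0 (c ⬝ᵥ S *ᵥ c).toNNReal := by
  have mean_eq : ∫ x, innerSL ℝ c x ∂multivariateGaussian 0 S = 0 := by
    rw [ContinuousLinearMap.integral_comp_id_comm IsGaussian.integrable_id]
    simp
  have variance_eq : Var[innerSL ℝ c; multivariateGaussian 0 S] = c ⬝ᵥ S *ᵥ c := by
    rw [← covarianceBilin_multivariateGaussian (μ := 0) hS,
      covarianceBilin_self IsGaussian.memLp_two_id]
    rfl
  have h := IsGaussian.map_eq_gaussianReal (μ := multivariateGaussian 0 S) (innerSL ℝ c)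
  rwa [mean_eq, variance_eq] at h

lemma integrable_exp_inner_multivariateGaussian (hS : S.PosSemidef) (c : EuclideanSpace ℝ ι) :
    Integrable (fun x => Real.exp ⟪c, x⟫) (multivariateGaussian 0 S) := by
  have h := integrable_exp_mul_gaussianReal (μ := 0) (v := (c ⬝ᵥ S *ᵥ c).toNNReal) 1
  rw [← map_inner_multivariateGaussian hS,
    integrable_map_measure (by fun_prop) (by fun_prop)] at h
  simpa only [Function.comp_def, one_mul] using h

lemma integral_exp_inner_multivariateGaussian (hS : S.PosSemidef) (c : EuclideanSpace ℝ ι) :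
    ∫ x, Real.exp ⟪c, x⟫ ∂multivariateGaussian 0 S = Real.exp ((c ⬝ᵥ S *ᵥ c) / 2) := by
  have hnonneg : 0 ≤ c ⬝ᵥ S *ᵥ c := by
    simpa using hS.dotProduct_mulVec_nonneg (c : ι → ℝ)
  simpa [mgf, Real.coe_toNNReal _ hnonneg] using
    mgf_gaussianReal (map_inner_multivariateGaussian hS c) 1

lemma multivariateGaussian_zero_add (hS : S.PosSemidef) (hR : R.PosSemidef) :
    multivariateGaussian 0 (S + R) = multivariateGaussian 0 S ∗ multivariateGaussian 0 R := by
  refine Measure.ext_of_charFun (funext fun t => ?_)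
  rw [charFun_conv, charFun_multivariateGaussian hS, charFun_multivariateGaussian hR,
    charFun_multivariateGaussian (hS.add hR), ← Complex.exp_add]
  congr 1
  simp only [Matrix.add_mulVec, dotProduct_add, inner_zero_right, Complex.ofReal_add]
  push_cast
  ring

end GaussianMeasure

section WickExponential

variable {ι : Type*} (S R : Matrix ι ι ℝ)

/-- The Wick (normalized) exponential `exp (x i - E[x i ^ 2] / 2)` of the `i`-th coordinate under
the centered Gaussian measure with covariance `S`. -/
def wickExp (i : ι) (x : EuclideanSpace ℝ ι) : ℝ :=
  Real.exp (x i - S i i / 2)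

lemma wickExp_pos (i : ι) (x : EuclideanSpace ℝ ι) : 0 < wickExp S i x :=
  Real.exp_pos _

lemma continuous_wickExp (i : ι) : Continuous (wickExp S i) := by
  unfold wickExp
  fun_prop

lemma wickExp_add (i : ι) (x y : EuclideanSpace ℝ ι) :
    wickExp (S + R) i (x + y) = wickExp S i x * wickExp R i y := by
  rw [wickExp, wickExp, wickExp, ← Real.exp_add]
  simp only [PiLp.add_apply, Matrix.add_apply]
  ring_nf

end WickExponential

section Moments

variable {ι : Type*} [Fintype ι] [DecidableEq ι] {S : Matrix ι ι ℝ}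

lemma wickExp_pow_eq (S : Matrix ι ι ℝ) (i : ι) (k : ℕ) (x : EuclideanSpace ℝ ι) :
    wickExp S i x ^ k =
      Real.exp ⟪EuclideanSpace.single i (k : ℝ), x⟫ * Real.exp (-(k * (S i i / 2))) := by
  rw [wickExp, ← Real.exp_nat_mul, ← Real.exp_add, EuclideanSpace.inner_single_left]
  simp only [conj_trivial]
  ring_nf

lemma wickExp_mul_wickExp_eq (S : Matrix ι ι ℝ) (i j : ι) (x : EuclideanSpace ℝ ι) :
    wickExp S i x * wickExp S j x =
      Real.exp ⟪EuclideanSpace.single i 1 + EuclideanSpace.single j 1, x⟫ *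
        Real.exp (-((S i i + S j j) / 2)) := by
  rw [wickExp, wickExp, ← Real.exp_add, ← Real.exp_add, inner_add_left,
    EuclideanSpace.inner_single_left, EuclideanSpace.inner_single_left]
  simp only [conj_trivial]
  ring_nf

lemma integral_wickExp_pow (hS : S.PosSemidef) (i : ι) (k : ℕ) :
    ∫ x, wickExp S i x ^ k ∂multivariateGaussian 0 S =
      Real.exp (S i i) ^ k.choose 2 := by
  simp_rw [wickExp_pow_eq]
  rw [integral_mul_const, integral_exp_inner_multivariateGaussian hS, ← Real.exp_add,
    ← Real.exp_nat_mul, Nat.cast_choose_two]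
  congr 1
  simp only [dotProduct, PiLp.single_apply, Matrix.mulVec, mul_ite, mul_zero, Finset.sum_ite_eq',
    Finset.mem_univ, ↓reduceIte, ite_mul, zero_mul]
  ring

lemma integral_wickExp_mul_wickExp (hS : S.PosSemidef) (i j : ι) :
    ∫ x, wickExp S i x * wickExp S j x ∂multivariateGaussian 0 S = Real.exp (S i j) := by
  have hsymm : S j i = S i j := by simpa using hS.1.apply i j
  simp_rw [wickExp_mul_wickExp_eq]
  rw [integral_mul_const, integral_exp_inner_multivariateGaussian hS, ← Real.exp_add]
  congr 1
  simp only [dotProduct, PiLp.add_apply, PiLp.single_apply, Matrix.mulVec, mul_add, mul_ite,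
    mul_one, mul_zero, Finset.sum_add_distrib, Finset.sum_ite_eq', Finset.mem_univ, ↓reduceIte,
    add_mul, ite_mul, one_mul, zero_mul, hsymm]
  ring

lemma memLp_wickExp (hS : S.PosSemidef) (i : ι) (k : ℕ) :
    MemLp (wickExp S i) k (multivariateGaussian 0 S) := by
  have hmeas := (continuous_wickExp S i).aestronglyMeasurable (μ := multivariateGaussian 0 S)
  rcases eq_or_ne k 0 with rfl | hk
  · simpa only [Nat.cast_zero, memLp_zero_iff_aestronglyMeasurable] using hmeas
  · refine (integrable_norm_rpow_iff hmeas (by simpa using hk) (by simp)).1 ?_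
    simp only [Real.norm_of_nonneg (wickExp_pos S i _).le, ENNReal.toReal_natCast,
      Real.rpow_natCast, wickExp_pow_eq]
    exact (integrable_exp_inner_multivariateGaussian hS _).mul_const _

lemma integrable_wickExp_pow (hS : S.PosSemidef) (i : ι) (k : ℕ) :
    Integrable (fun x => wickExp S i x ^ k) (multivariateGaussian 0 S) := by
  simpa only [Real.norm_of_nonneg (wickExp_pos S i _).le] using
    (memLp_wickExp hS i k).integrable_norm_pow'

lemma integral_wickExp_sub_one_sq (hS : S.PosSemidef) (i : ι) :
    ∫ x, (wickExp S i x - 1) ^ 2 ∂multivariateGaussian 0 S = Real.exp (S i i) - 1 := by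
  have hint := integrable_wickExp_pow hS i
  have expand (x : EuclideanSpace ℝ ι) :
      (wickExp S i x - 1) ^ 2 = wickExp S i x ^ 2 - 2 * wickExp S i x ^ 1 + 1 := by ring
  simp_rw [expand]
  rw [integral_add (by fun_prop) (by fun_prop), integral_sub (by fun_prop) (by fun_prop),
    integral_const_mul, integral_wickExp_pow hS, integral_wickExp_pow hS]
  simp only [Nat.choose_self, pow_one, Nat.choose_succ_self, pow_zero, mul_one, integral_const,
    probReal_univ, smul_eq_mul]
  ring

lemma integral_wickExp_sub_one_pow_four (hS : S.PosSemidef) (i : ι) :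
    ∫ x, (wickExp S i x - 1) ^ 4 ∂multivariateGaussian 0 S =
      (Real.exp (S i i) - 1) ^ 2 *
        (Real.exp (S i i) ^ 4 + 2 * Real.exp (S i i) ^ 3 + 3 * Real.exp (S i i) ^ 2 - 3) := by
  have hint := integrable_wickExp_pow hS i
  have expand (x : EuclideanSpace ℝ ι) : (wickExp S i x - 1) ^ 4 =
      wickExp S i x ^ 4 - 4 * wickExp S i x ^ 3 + 6 * wickExp S i x ^ 2
        - 4 * wickExp S i x ^ 1 + 1 := by ring
  simp_rw [expand]
  rw [integral_add (by fun_prop) (by fun_prop), integral_sub (by fun_prop) (by fun_prop),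
    integral_add (by fun_prop) (by fun_prop), integral_sub (by fun_prop) (by fun_prop)]
  simp only [integral_const_mul, integral_wickExp_pow hS]
  simp only [Nat.choose, add_zero, Nat.reduceAdd, pow_one, pow_zero, mul_one, integral_const,
    probReal_univ, smul_eq_mul]
  ring

lemma exp_sub_one_le_mul_exp (v : ℝ) : Real.exp v - 1 ≤ v * Real.exp v := by
  have h := mul_le_mul_of_nonneg_right (Real.one_sub_le_exp_neg v) (Real.exp_pos v).le
  rw [← Real.exp_add, neg_add_cancel, Real.exp_zero] at h
  linarith

lemma integral_wickExp_sub_one_sq_le (hS : S.PosSemidef) {i : ι} {r : ℝ} (hr : S i i ≤ r) :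
    ∫ x, (wickExp S i x - 1) ^ 2 ∂multivariateGaussian 0 S ≤ r * Real.exp r := by
  rw [integral_wickExp_sub_one_sq hS]
  exact (sub_le_sub_right (Real.exp_le_exp.2 hr) 1).trans (exp_sub_one_le_mul_exp r)

lemma integral_wickExp_sub_one_pow_four_le (hS : S.PosSemidef) {i : ι} {r : ℝ}
    (hr : S i i ≤ r) :
    ∫ x, (wickExp S i x - 1) ^ 4 ∂multivariateGaussian 0 S ≤ 6 * r ^ 2 * Real.exp (6 * r) := by
  set u := Real.exp (S i i)
  have one_le : 1 ≤ u := Real.one_le_exp hS.diag_nonneg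
  have le_exp : u ≤ Real.exp r := Real.exp_le_exp.2 hr
  have sub_one_le : u - 1 ≤ r * Real.exp r :=
    (sub_le_sub_right le_exp 1).trans (exp_sub_one_le_mul_exp r)
  have poly_le : u ^ 4 + 2 * u ^ 3 + 3 * u ^ 2 - 3 ≤ 6 * u ^ 4 := by
    have h3 : u ^ 3 ≤ u ^ 4 := pow_le_pow_right₀ one_le (by norm_num)
    have h2 : u ^ 2 ≤ u ^ 4 := pow_le_pow_right₀ one_le (by norm_num)
    linarith
  calc ∫ x, (wickExp S i x - 1) ^ 4 ∂multivariateGaussian 0 S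
      = (u - 1) ^ 2 * (u ^ 4 + 2 * u ^ 3 + 3 * u ^ 2 - 3) :=
        integral_wickExp_sub_one_pow_four hS i
    _ ≤ (u - 1) ^ 2 * (6 * u ^ 4) := by gcongr
    _ ≤ (r * Real.exp r) ^ 2 * (6 * Real.exp r ^ 4) := by
        have : 0 ≤ u - 1 := sub_nonneg.2 one_le
        gcongr
    _ = 6 * r ^ 2 * Real.exp (6 * r) := by
        rw [show (6 : ℝ) * r = (6 : ℕ) * r by norm_num, Real.exp_nat_mul]
        ring

lemma abs_pow_three_le {s : ℝ} (hs : 0 < s) (d : ℝ) :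
    |d| ^ 3 ≤ s / 2 * d ^ 2 + 1 / (2 * s) * d ^ 4 := by
  have hsq : d ^ 2 = |d| ^ 2 := (sq_abs d).symm
  have hfour : d ^ 4 = |d| ^ 4 := (Even.pow_abs (by decide) d).symm
  rw [← sub_nonneg, hsq, hfour, show s / 2 * |d| ^ 2 + 1 / (2 * s) * |d| ^ 4 - |d| ^ 3 =
    |d| ^ 2 * (s - |d|) ^ 2 / (2 * s) by field_simp; ring]
  positivity

lemma integrable_wickExp_sub_one_pow (hS : S.PosSemidef) (i : ι) (k : ℕ) :
    Integrable (fun x => (wickExp S i x - 1) ^ k) (multivariateGaussian 0 S) := by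
  refine ((memLp_wickExp hS i k).sub (memLp_const 1)).integrable_norm_pow'.mono ?_ ?_
  · have := continuous_wickExp S i
    exact Continuous.aestronglyMeasurable (by fun_prop)
  · simp

lemma integral_abs_wickExp_sub_one_pow_three_le (hS : S.PosSemidef) {i : ι} {r : ℝ}
    (hr : 0 < r) (hSr : S i i ≤ r) :
    ∫ x, |wickExp S i x - 1| ^ 3 ∂multivariateGaussian 0 S ≤
      4 * Real.exp (6 * r) * (r * √r) := by
  have hint := integrable_wickExp_sub_one_pow hS i
  have hsqrt : 0 < √r := Real.sqrt_pos.2 hr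
  have four_div_sqrt : 1 / (2 * √r) * (6 * r ^ 2 * Real.exp (6 * r)) =
      3 * Real.exp (6 * r) * (r * √r) := by
    rw [show r ^ 2 = √r * (r * √r) by rw [mul_left_comm, Real.mul_self_sqrt hr.le, sq]]
    field_simp
    norm_num
  have exp_le : Real.exp r ≤ Real.exp (6 * r) := Real.exp_le_exp.2 (by linarith)
  calc ∫ x, |wickExp S i x - 1| ^ 3 ∂multivariateGaussian 0 S
      ≤ ∫ x, (√r / 2 * (wickExp S i x - 1) ^ 2 + 1 / (2 * √r) * (wickExp S i x - 1) ^ 4)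
          ∂multivariateGaussian 0 S :=
        integral_mono (by simpa only [abs_pow] using (hint 3).abs)
          (((hint 2).const_mul _).add ((hint 4).const_mul _)) fun x => abs_pow_three_le hsqrt _
    _ = √r / 2 * ∫ x, (wickExp S i x - 1) ^ 2 ∂multivariateGaussian 0 S +
          1 / (2 * √r) * ∫ x, (wickExp S i x - 1) ^ 4 ∂multivariateGaussian 0 S := by
        rw [integral_add ((hint 2).const_mul _) ((hint 4).const_mul _), integral_const_mul,
          integral_const_mul]
    _ ≤ √r / 2 * (r * Real.exp r) + 1 / (2 * √r) * (6 * r ^ 2 * Real.exp (6 * r)) := by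
        gcongr
        · exact integral_wickExp_sub_one_sq_le hS hSr
        · exact integral_wickExp_sub_one_pow_four_le hS hSr
    _ ≤ √r * (r * Real.exp (6 * r)) + 3 * Real.exp (6 * r) * (r * √r) := by
        rw [four_div_sqrt]
        gcongr
        exact half_le_self hsqrt.le
    _ = 4 * Real.exp (6 * r) * (r * √r) := by ring

end Moments

section TaylorExpectation

variable {Ω : Type*} [MeasurableSpace Ω] {μ : Measure Ω} {U : Ω → ℝ} {L K : ℝ≥0}

lemma integrable_lipschitzWith_comp [IsFiniteMeasure μ] {G : ℝ → ℝ} (hG : LipschitzWith L G)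
    (hU : Integrable U μ) : Integrable (fun ω => G (U ω)) μ := by
  refine ((hU.norm.const_mul L).add (integrable_const |G 0|)).mono'
    (hG.continuous.comp_aestronglyMeasurable hU.aestronglyMeasurable) (.of_forall fun ω => ?_)
  have h := hG.dist_le_mul (U ω) 0
  rw [Real.dist_eq, dist_zero_right] at h
  rw [Real.norm_eq_abs, Pi.add_apply]
  linarith [abs_sub_abs_le_abs_sub (G (U ω)) (G 0)]

lemma IsSmoothConvex.abs_integral_comp_sub_le [IsProbabilityMeasure μ] {G G' G'' : ℝ → ℝ}
    (hG : IsSmoothConvex L K G G' G'') (hU : MemLp U 3 μ) :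
    |∫ ω, G (U ω) ∂μ - (G μ[U] + G'' μ[U] / 2 * Var[U; μ])| ≤ K * ∫ ω, |U ω - μ[U]| ^ 3 ∂μ := by
  set m := μ[U]
  have hU1 : Integrable U μ := hU.integrable (by norm_num)
  have hGU : Integrable (fun ω => G (U ω)) μ := integrable_lipschitzWith_comp hG.lipschitzWith hU1
  have hconst : Integrable (fun ω => G (U ω) - G m) μ := hGU.sub (integrable_const _)
  have hlin : Integrable (fun ω => G' m * (U ω - m)) μ :=
    (hU1.sub (integrable_const _)).const_mul _
  have hsq : Integrable (fun ω => G'' m / 2 * (U ω - m) ^ 2) μ :=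
    ((hU.mono_exponent (by norm_num)).sub (memLp_const m)).integrable_sq.const_mul _
  have hcube : Integrable (fun ω => |U ω - m| ^ 3) μ :=
    (hU.sub (memLp_const m)).integrable_norm_pow (by norm_num)
  have hfirst : Integrable (fun ω => G (U ω) - G m - G' m * (U ω - m)) μ := hconst.sub hlin
  have integral_remainder :
      ∫ ω, (G (U ω) - G m - G' m * (U ω - m) - G'' m / 2 * (U ω - m) ^ 2) ∂μ =
        ∫ ω, G (U ω) ∂μ - (G m + G'' m / 2 * Var[U; μ]) := by
    rw [integral_sub hfirst hsq, integral_sub hconst hlin, integral_sub hGU (integrable_const _),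
      integral_const_mul, integral_const_mul, integral_sub hU1 (integrable_const _),
      variance_eq_integral hU1.aemeasurable, integral_const, integral_const, probReal_univ]
    simp only [smul_eq_mul, one_mul, m]
    ring
  calc |∫ ω, G (U ω) ∂μ - (G m + G'' m / 2 * Var[U; μ])|
      = |∫ ω, (G (U ω) - G m - G' m * (U ω - m) - G'' m / 2 * (U ω - m) ^ 2) ∂μ| := by
        rw [integral_remainder]
    _ ≤ ∫ ω, |G (U ω) - G m - G' m * (U ω - m) - G'' m / 2 * (U ω - m) ^ 2| ∂μ :=
        abs_integral_le_integral_abs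
    _ ≤ ∫ ω, K * |U ω - m| ^ 3 ∂μ :=
        integral_mono (hfirst.sub hsq).abs (hcube.const_mul _) fun ω =>
          hG.abs_taylor_remainder_le m (U ω)
    _ = K * ∫ ω, |U ω - m| ^ 3 ∂μ := integral_const_mul _ _

end TaylorExpectation

section WickExponentialSum

variable {ι : Type*} [Fintype ι] (S R : Matrix ι ι ℝ) (q : ι → ℝ)

/-- The combination `∑ i, q i * wickExp S i` of Wick exponentials, the random variable of Kahane's
inequality. -/
def wickExpSum (x : EuclideanSpace ℝ ι) : ℝ := ∑ i, q i * wickExp S i x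

lemma continuous_wickExpSum : Continuous (wickExpSum S q) :=
  continuous_finsetSum _ fun i _ => (continuous_wickExp S i).const_mul (q i)

lemma wickExpSum_add (x y : EuclideanSpace ℝ ι) :
    wickExpSum (S + R) q (x + y) = wickExpSum R (fun i => q i * wickExp S i x) y := by
  simp only [wickExpSum, wickExp_add, mul_assoc]

variable {q}

lemma wickExpSum_pos (hq : ∀ i, 0 ≤ q i) (hq0 : q ≠ 0) (x : EuclideanSpace ℝ ι) :
    0 < wickExpSum S q x := by
  obtain ⟨i, hi⟩ := Function.ne_iff.1 hq0
  exact Finset.sum_pos' (fun j _ => mul_nonneg (hq j) (wickExp_pos S j x).le)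
    ⟨i, Finset.mem_univ i, mul_pos ((hq i).lt_of_ne' hi) (wickExp_pos S i x)⟩

lemma continuous_convexOn_comp_wickExpSum {F : ℝ → ℝ} (hF : ConvexOn ℝ (Set.Ici 0) F)
    (hq : ∀ i, 0 ≤ q i) (hq0 : q ≠ 0) : Continuous fun x => F (wickExpSum S q x) := by
  have hcont := hF.continuousOn_interior
  rw [interior_Ici] at hcont
  exact hcont.comp_continuous (continuous_wickExpSum S q) (wickExpSum_pos S hq hq0)

lemma abs_wickExpSum_sub_sum_pow_three_le (hq : ∀ i, 0 ≤ q i) (x : EuclideanSpace ℝ ι) :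
    |wickExpSum S q x - ∑ i, q i| ^ 3 ≤
      Fintype.card ι ^ 2 * ∑ i, q i ^ 3 * |wickExp S i x - 1| ^ 3 := by
  have centered : wickExpSum S q x - ∑ i, q i = ∑ i, q i * (wickExp S i x - 1) := by
    simp only [wickExpSum, mul_sub, mul_one, Finset.sum_sub_distrib]
  calc |wickExpSum S q x - ∑ i, q i| ^ 3
      ≤ (∑ i, |q i * (wickExp S i x - 1)|) ^ 3 := by
        rw [centered]
        gcongr
        exact Finset.abs_sum_le_sum_abs _ _
    _ ≤ Fintype.card ι ^ 2 * ∑ i, |q i * (wickExp S i x - 1)| ^ 3 :=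
        pow_sum_le_card_mul_sum_pow (fun i _ => abs_nonneg _) 2
    _ = Fintype.card ι ^ 2 * ∑ i, q i ^ 3 * |wickExp S i x - 1| ^ 3 := by
        simp only [abs_mul, mul_pow, abs_of_nonneg (hq _)]

variable [DecidableEq ι] {S R}

lemma memLp_wickExpSum (hS : S.PosSemidef) (q : ι → ℝ) (k : ℕ) :
    MemLp (wickExpSum S q) k (multivariateGaussian 0 S) :=
  memLp_finsetSum _ fun i _ => (memLp_wickExp hS i k).const_mul (q i)

lemma integrable_wickExpSum (hS : S.PosSemidef) (q : ι → ℝ) :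
    Integrable (wickExpSum S q) (multivariateGaussian 0 S) :=
  memLp_one_iff_integrable.1 (mod_cast memLp_wickExpSum hS q 1)

lemma integral_wickExpSum (hS : S.PosSemidef) (q : ι → ℝ) :
    ∫ x, wickExpSum S q x ∂multivariateGaussian 0 S = ∑ i, q i := by
  have hint (i : ι) : Integrable (wickExp S i) (multivariateGaussian 0 S) := by
    simpa using integrable_wickExp_pow hS i 1
  have mean_wickExp (i : ι) : ∫ x, wickExp S i x ∂multivariateGaussian 0 S = 1 := by
    simpa using integral_wickExp_pow hS i 1
  simp only [wickExpSum, integral_finsetSum _ fun i _ => (hint i).const_mul (q i),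
    integral_const_mul, mean_wickExp, mul_one]

lemma integral_wickExpSum_sq (hS : S.PosSemidef) (q : ι → ℝ) :
    ∫ x, wickExpSum S q x ^ 2 ∂multivariateGaussian 0 S =
      ∑ i, ∑ j, q i * q j * Real.exp (S i j) := by
  have memLp_two (i : ι) : MemLp (wickExp S i) 2 (multivariateGaussian 0 S) :=
    mod_cast memLp_wickExp hS i 2
  have hint (i j : ι) :
      Integrable (fun x => q i * q j * (wickExp S i x * wickExp S j x))
        (multivariateGaussian 0 S) :=
    ((memLp_two i).integrable_mul (memLp_two j)).const_mul (q i * q j)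
  simp only [wickExpSum, sq, Finset.sum_mul_sum, mul_mul_mul_comm (q _)]
  rw [integral_finsetSum _ fun i _ => integrable_finsetSum _ fun j _ => hint i j]
  simp only [integral_finsetSum _ fun j _ => hint _ j, integral_const_mul,
    integral_wickExp_mul_wickExp hS]

lemma integrable_abs_wickExpSum_sub_pow (hS : S.PosSemidef) (q : ι → ℝ) (c : ℝ) (k : ℕ) :
    Integrable (fun x => |wickExpSum S q x - c| ^ k) (multivariateGaussian 0 S) :=
  ((memLp_wickExpSum hS q k).sub (memLp_const c)).integrable_norm_pow'

lemma variance_wickExpSum (hS : S.PosSemidef) (q : ι → ℝ) :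
    Var[wickExpSum S q; multivariateGaussian 0 S] =
      ∑ i, ∑ j, q i * q j * Real.exp (S i j) - (∑ i, q i) ^ 2 := by
  rw [variance_eq_sub (mod_cast memLp_wickExpSum hS q 2), integral_wickExpSum hS]
  simp only [Pi.pow_apply, integral_wickExpSum_sq hS]

/-- A bound for `E[|Y - 1| ^ 3]`, where `Y` is the Wick exponential of a Gaussian of variance at
most `r`; it is `O(r ^ (3 / 2))` as `r → 0`. -/
def thirdMomentBound (r : ℝ) : ℝ := 4 * Real.exp (6 * r) * (r * √r)

lemma integral_abs_wickExpSum_sub_sum_pow_three_le (hS : S.PosSemidef) (hq : ∀ i, 0 ≤ q i)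
    {r : ℝ} (hr : 0 < r) (hSr : ∀ i, S i i ≤ r) :
    ∫ x, |wickExpSum S q x - ∑ i, q i| ^ 3 ∂multivariateGaussian 0 S ≤
      Fintype.card ι ^ 2 * (thirdMomentBound r * ∑ i, q i ^ 3) := by
  have hint (i : ι) : Integrable (fun x => q i ^ 3 * |wickExp S i x - 1| ^ 3)
      (multivariateGaussian 0 S) := by
    simpa only [abs_pow] using (integrable_wickExp_sub_one_pow hS i 3).abs.const_mul (q i ^ 3)
  calc ∫ x, |wickExpSum S q x - ∑ i, q i| ^ 3 ∂multivariateGaussian 0 S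
      ≤ ∫ x, Fintype.card ι ^ 2 * ∑ i, q i ^ 3 * |wickExp S i x - 1| ^ 3
          ∂multivariateGaussian 0 S :=
        integral_mono (integrable_abs_wickExpSum_sub_pow hS q _ 3)
          ((integrable_finsetSum _ fun i _ => hint i).const_mul _)
          (abs_wickExpSum_sub_sum_pow_three_le S hq)
    _ = Fintype.card ι ^ 2 *
          ∑ i, q i ^ 3 * ∫ x, |wickExp S i x - 1| ^ 3 ∂multivariateGaussian 0 S := by
        simp only [integral_const_mul, integral_finsetSum _ fun i _ => hint i]
    _ ≤ Fintype.card ι ^ 2 * ∑ i, q i ^ 3 * thirdMomentBound r := by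
        gcongr with i
        · exact pow_nonneg (hq i) 3
        · exact integral_abs_wickExp_sub_one_pow_three_le hS hr (hSr i)
    _ = Fintype.card ι ^ 2 * (thirdMomentBound r * ∑ i, q i ^ 3) := by
        rw [← Finset.sum_mul, mul_comm (thirdMomentBound r)]

end WickExponentialSum

section Expectation

variable {ι : Type*} [Fintype ι] [DecidableEq ι]

/-- The expectation of `F (∑ i, p i * exp (X i - E[X i ^ 2] / 2))` when `X` is a centered Gaussian
vector with covariance matrix `S`. -/
def wickExpectation (F : ℝ → ℝ) (S : Matrix ι ι ℝ) (p : ι → ℝ) : ℝ :=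
  ∫ x, F (wickExpSum S p x) ∂multivariateGaussian 0 S

variable {S R A B : Matrix ι ι ℝ} {p q : ι → ℝ} {L K : ℝ≥0} {G G' G'' : ℝ → ℝ}

lemma wickExpectation_zero (F : ℝ → ℝ) (S : Matrix ι ι ℝ) : wickExpectation F S 0 = F 0 := by
  simp [wickExpectation, wickExpSum]

lemma integrable_lipschitzWith_comp_wickExpSum (hS : S.PosSemidef) (hG : LipschitzWith L G)
    (q : ι → ℝ) : Integrable (fun x => G (wickExpSum S q x)) (multivariateGaussian 0 S) :=
  integrable_lipschitzWith_comp hG (integrable_wickExpSum hS q)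

lemma IsSmoothConvex.abs_wickExpectation_sub_le (hG : IsSmoothConvex L K G G' G'')
    (hS : S.PosSemidef) (hq : ∀ i, 0 ≤ q i) {r : ℝ} (hr : 0 < r) (hSr : ∀ i, S i i ≤ r) :
    |wickExpectation G S q - (G (∑ i, q i) + G'' (∑ i, q i) / 2 *
        (∑ i, ∑ j, q i * q j * Real.exp (S i j) - (∑ i, q i) ^ 2))| ≤
      K * (Fintype.card ι ^ 2 * (thirdMomentBound r * ∑ i, q i ^ 3)) := by
  have taylor := hG.abs_integral_comp_sub_le (mod_cast memLp_wickExpSum hS q 3)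
  rw [integral_wickExpSum hS, variance_wickExpSum hS] at taylor
  exact taylor.trans (mul_le_mul_of_nonneg_left
    (integral_abs_wickExpSum_sub_sum_pow_three_le hS hq hr hSr) K.2)

lemma IsSmoothConvex.wickExpectation_le_add (hG : IsSmoothConvex L K G G' G'')
    (hA : A.PosSemidef) (hB : B.PosSemidef) (hAB : ∀ i j, A i j ≤ B i j) (hq : ∀ i, 0 ≤ q i)
    {r : ℝ} (hr : 0 < r) (hBr : ∀ i, B i i ≤ r) :
    wickExpectation G A q ≤ wickExpectation G B q +
      2 * K * Fintype.card ι ^ 2 * thirdMomentBound r * ∑ i, q i ^ 3 := by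
  have expand_A := abs_le.1 (hG.abs_wickExpectation_sub_le hA hq hr
    fun i => (hAB i i).trans (hBr i))
  have expand_B := abs_le.1 (hG.abs_wickExpectation_sub_le hB hq hr hBr)
  have variance_le : ∑ i, ∑ j, q i * q j * Real.exp (A i j) ≤
      ∑ i, ∑ j, q i * q j * Real.exp (B i j) := by
    gcongr with i _ j
    · exact mul_nonneg (hq i) (hq j)
    · exact hAB i j
  have quadratic_le := mul_le_mul_of_nonneg_left (sub_le_sub_right variance_le ((∑ i, q i) ^ 2))
    (div_nonneg (hG.second_deriv_nonneg (∑ i, q i)) zero_le_two)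
  linarith [expand_A.2, expand_B.1]

lemma wickExpectation_add (hS : S.PosSemidef) (hR : R.PosSemidef) (hG : LipschitzWith L G)
    (p : ι → ℝ) :
    wickExpectation G (S + R) p =
      ∫ x, wickExpectation G R (fun i => p i * wickExp S i x) ∂multivariateGaussian 0 S := by
  have hint := integrable_lipschitzWith_comp_wickExpSum (hS.add hR) hG p
  rw [multivariateGaussian_zero_add hS hR] at hint
  simp only [wickExpectation, multivariateGaussian_zero_add hS hR, integral_conv hint,
    wickExpSum_add]

lemma integrable_wickExpectation_mul_wickExp (hS : S.PosSemidef) (hR : R.PosSemidef)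
    (hG : LipschitzWith L G) (p : ι → ℝ) :
    Integrable (fun x => wickExpectation G R fun i => p i * wickExp S i x)
      (multivariateGaussian 0 S) := by
  have hint := integrable_lipschitzWith_comp_wickExpSum (hS.add hR) hG p
  have hcont : Continuous fun x => G (wickExpSum (S + R) p x) :=
    hG.continuous.comp (continuous_wickExpSum (S + R) p)
  rw [multivariateGaussian_zero_add hS hR, Measure.conv,
    integrable_map_measure hcont.aestronglyMeasurable (by fun_prop)] at hint
  simpa only [wickExpectation, ← wickExpSum_add, Function.comp_apply] using hint.integral_prod_left

lemma IsSmoothConvex.wickExpectation_add_le_add (hG : IsSmoothConvex L K G G' G'')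
    (hS : S.PosSemidef) (hA : A.PosSemidef) (hB : B.PosSemidef) (hAB : ∀ i j, A i j ≤ B i j)
    (hp : ∀ i, 0 ≤ p i) {r : ℝ} (hr : 0 < r) (hBr : ∀ i, B i i ≤ r) :
    wickExpectation G (S + A) p ≤ wickExpectation G (S + B) p +
      2 * K * Fintype.card ι ^ 2 * thirdMomentBound r * ∑ i, p i ^ 3 * Real.exp (S i i) ^ 3 := by
  set c := 2 * K * Fintype.card ι ^ 2 * thirdMomentBound r
  have integrable_step {R : Matrix ι ι ℝ} (hR : R.PosSemidef) :=
    integrable_wickExpectation_mul_wickExp hS hR hG.lipschitzWith p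
  have integrable_cube (i : ι) : Integrable (fun x => (p i * wickExp S i x) ^ 3)
      (multivariateGaussian 0 S) := by
    simpa only [mul_pow] using (integrable_wickExp_pow hS i 3).const_mul (p i ^ 3)
  have integral_cube (i : ι) : ∫ x, (p i * wickExp S i x) ^ 3 ∂multivariateGaussian 0 S =
      p i ^ 3 * Real.exp (S i i) ^ 3 := by
    simp only [mul_pow, integral_const_mul, integral_wickExp_pow hS]
    rfl
  have integrable_error : Integrable (fun x => c * ∑ i, (p i * wickExp S i x) ^ 3)
      (multivariateGaussian 0 S) :=
    (integrable_finsetSum _ fun i _ => integrable_cube i).const_mul c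
  calc wickExpectation G (S + A) p
      = ∫ x, wickExpectation G A (fun i => p i * wickExp S i x) ∂multivariateGaussian 0 S :=
        wickExpectation_add hS hA hG.lipschitzWith p
    _ ≤ ∫ x, (wickExpectation G B (fun i => p i * wickExp S i x) +
          c * ∑ i, (p i * wickExp S i x) ^ 3) ∂multivariateGaussian 0 S :=
        integral_mono (integrable_step hA) ((integrable_step hB).add integrable_error) fun x =>
          hG.wickExpectation_le_add hA hB hAB
            (fun i => mul_nonneg (hp i) (wickExp_pos S i x).le) hr hBr
    _ = wickExpectation G (S + B) p + c * ∑ i, p i ^ 3 * Real.exp (S i i) ^ 3 := by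
        rw [integral_add (integrable_step hB) integrable_error, integral_const_mul,
          integral_finsetSum _ fun i _ => integrable_cube i,
          wickExpectation_add hS hB hG.lipschitzWith]
        simp only [integral_cube]

lemma thirdMomentBound_nonneg {r : ℝ} (hr : 0 ≤ r) : 0 ≤ thirdMomentBound r := by
  unfold thirdMomentBound
  positivity

lemma tendsto_mul_thirdMomentBound_div (V : ℝ) :
    Tendsto (fun N : ℕ => N * thirdMomentBound (V / N)) atTop (nhds 0) := by
  have hdiv : Tendsto (fun N : ℕ => V / N) atTop (nhds 0) :=
    tendsto_const_nhds.div_atTop tendsto_natCast_atTop_atTop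
  have hcont : Continuous fun r : ℝ => 4 * Real.exp (6 * r) * (V * √r) := by fun_prop
  have hlim := (hcont.tendsto 0).comp hdiv
  simp only [Real.sqrt_zero, mul_zero] at hlim
  refine hlim.congr' ?_
  filter_upwards [eventually_ne_atTop 0] with N hN
  have hN' : (N : ℝ) ≠ 0 := Nat.cast_ne_zero.2 hN
  simp only [Function.comp_apply, thirdMomentBound]
  field_simp

lemma IsSmoothConvex.wickExpectation_add_nsmul_le (hG : IsSmoothConvex L K G G' G'')
    (hA : A.PosSemidef) (hB : B.PosSemidef) (hAB : ∀ i j, A i j ≤ B i j) (hp : ∀ i, 0 ≤ p i)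
    {r V : ℝ} (hr : 0 < r) (hBr : ∀ i, B i i ≤ r) (k : ℕ) {S : Matrix ι ι ℝ}
    (hS : S.PosSemidef) (hSV : ∀ i, S i i + k * r ≤ V) :
    wickExpectation G (S + k • A) p ≤ wickExpectation G (S + k • B) p +
      k * (2 * K * Fintype.card ι ^ 2 * thirdMomentBound r *
        ∑ i, p i ^ 3 * Real.exp V ^ 3) := by
  induction k generalizing S with
  | zero => simp
  | succ k ih =>
    push_cast at hSV ⊢
    have hbound := thirdMomentBound_nonneg hr.le
    have diag_le (i : ι) : (S + k • A) i i ≤ V := by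
      have := mul_le_mul_of_nonneg_left ((hAB i i).trans (hBr i)) k.cast_nonneg
      rw [Matrix.add_apply, Matrix.smul_apply, nsmul_eq_mul]
      linarith [hSV i]
    have hkA : (k • A).PosSemidef := hA.smul k.zero_le
    have swap_last := hG.wickExpectation_add_le_add (hS.add hkA) hA hB hAB hp hr hBr
    have swap_rest := ih (hS.add hB) fun i => by
      rw [Matrix.add_apply]
      linarith [hSV i, hBr i]
    have error_le : ∑ i, p i ^ 3 * Real.exp ((S + k • A) i i) ^ 3 ≤
        ∑ i, p i ^ 3 * Real.exp V ^ 3 := by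
      gcongr with i
      · exact pow_nonneg (hp i) 3
      · exact diag_le i
    rw [show S + (k + 1) • A = S + k • A + A by rw [succ_nsmul, add_assoc],
      show S + (k + 1) • B = S + B + k • B by rw [succ_nsmul', add_assoc]]
    rw [add_right_comm] at swap_rest
    have := mul_le_mul_of_nonneg_left error_le
      (show 0 ≤ 2 * K * Fintype.card ι ^ 2 * thirdMomentBound r by positivity)
    linarith

lemma IsSmoothConvex.wickExpectation_mono (hG : IsSmoothConvex L K G G' G'')
    (hA : A.PosSemidef) (hB : B.PosSemidef) (hAB : ∀ i j, A i j ≤ B i j) (hp : ∀ i, 0 ≤ p i) :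
    wickExpectation G A p ≤ wickExpectation G B p := by
  obtain ⟨V, hV, hBV⟩ : ∃ V > 0, ∀ i, B i i ≤ V := by
    have diag_nonneg (i : ι) : 0 ≤ B i i := hB.diag_nonneg
    have sum_nonneg : 0 ≤ ∑ i, B i i := Finset.sum_nonneg fun i _ => diag_nonneg i
    refine ⟨∑ i, B i i + 1, by linarith, fun i => ?_⟩
    linarith [Finset.single_le_sum (fun i _ => diag_nonneg i) (Finset.mem_univ i)]
  let c := 2 * K * Fintype.card ι ^ 2 * ∑ i, p i ^ 3 * Real.exp V ^ 3
  have split_bound (N : ℕ) (hN : N ≠ 0) : wickExpectation G A p ≤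
      wickExpectation G B p + c * (N * thirdMomentBound (V / N)) := by
    have hN' : (0 : ℝ) < N := by positivity
    have nsmul_smul (M : Matrix ι ι ℝ) : 0 + N • (N : ℝ)⁻¹ • M = M := by
      rw [zero_add, ← Nat.cast_smul_eq_nsmul ℝ, smul_inv_smul₀ hN'.ne']
    have h := hG.wickExpectation_add_nsmul_le (hA.smul (inv_nonneg.2 hN'.le))
      (hB.smul (inv_nonneg.2 hN'.le))
      (fun i j => mul_le_mul_of_nonneg_left (hAB i j) (inv_nonneg.2 hN'.le)) hp (div_pos hV hN')
      (fun i => by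
        rw [Matrix.smul_apply, smul_eq_mul, div_eq_inv_mul]
        gcongr
        exact hBV i) N (V := V) Matrix.PosSemidef.zero
      (fun i => by rw [mul_div_cancel₀ _ hN'.ne']; simp)
    rw [nsmul_smul, nsmul_smul] at h
    exact h.trans_eq (by ring)
  have error_tendsto : Tendsto (fun N : ℕ => wickExpectation G B p +
      c * (N * thirdMomentBound (V / N))) atTop (nhds (wickExpectation G B p)) := by
    simpa using ((tendsto_mul_thirdMomentBound_div V).const_mul c).const_add
      (wickExpectation G B p)
  exact ge_of_tendsto error_tendsto ((eventually_ne_atTop 0).mono split_bound)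

lemma wickExpectation_mono_of_lipschitzWith (hG : LipschitzWith L G) (hconv : ConvexOn ℝ Set.univ G)
    (hA : A.PosSemidef) (hB : B.PosSemidef) (hAB : ∀ i j, A i j ≤ B i j) (hp : ∀ i, 0 ≤ p i) :
    wickExpectation G A p ≤ wickExpectation G B p := by
  refine le_of_forall_pos_le_add fun ε hε => ?_
  obtain ⟨K, H, H', H'', hH, hHG⟩ := exists_isSmoothConvex_abs_sub_le hG hconv (half_pos hε)
  have wickExpectation_sub_le {S : Matrix ι ι ℝ} (hS : S.PosSemidef) :
      |wickExpectation H S p - wickExpectation G S p| ≤ ε / 2 := by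
    rw [wickExpectation, wickExpectation,
      ← integral_sub (integrable_lipschitzWith_comp_wickExpSum hS hH.lipschitzWith p)
        (integrable_lipschitzWith_comp_wickExpSum hS hG p)]
    simpa only [Real.norm_eq_abs, probReal_univ, mul_one] using
      norm_integral_le_of_norm_le_const (μ := multivariateGaussian 0 S)
        (f := fun x => H (wickExpSum S p x) - G (wickExpSum S p x))
        (.of_forall fun x => hHG (wickExpSum S p x))
  have smooth_mono := hH.wickExpectation_mono hA hB hAB hp
  linarith [(abs_le.1 (wickExpectation_sub_le hA)).1, (abs_le.1 (wickExpectation_sub_le hB)).2]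

variable {F : ℝ → ℝ}

lemma integrable_convexOn_comp_wickExpSum (hF : ConvexOn ℝ (Set.Ici 0) F)
    (hgrowth : ∃ (C : ℝ) (N : ℕ), ∀ x : ℝ, 0 ≤ x → |F x| ≤ C * (1 + x ^ N))
    (hS : S.PosSemidef) (hp : ∀ i, 0 ≤ p i) (hp0 : p ≠ 0) :
    Integrable (fun x => F (wickExpSum S p x)) (multivariateGaussian 0 S) := by
  obtain ⟨C, N, hC⟩ := hgrowth
  have integrable_pow : Integrable (fun x => |wickExpSum S p x| ^ N) (multivariateGaussian 0 S) :=
    (memLp_wickExpSum hS p N).integrable_norm_pow'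
  refine (((integrable_const 1).add integrable_pow).const_mul C).mono'
    (continuous_convexOn_comp_wickExpSum S hF hp hp0).aestronglyMeasurable
    (.of_forall fun x => ?_)
  have hx := (wickExpSum_pos S hp hp0 x).le
  simpa only [Pi.add_apply, Real.norm_eq_abs, abs_of_nonneg hx] using hC _ hx

lemma tendsto_wickExpectation_of_monotone {G : ℕ → ℝ → ℝ} (hmono : Monotone G)
    (hlip : ∀ k, ∃ L, LipschitzWith L (G k))
    (hlim : ∀ x ∈ Set.Ioi 0, Tendsto (fun k => G k x) atTop (nhds (F x)))
    (hS : S.PosSemidef) (hp : ∀ i, 0 ≤ p i) (hp0 : p ≠ 0)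
    (hint : Integrable (fun x => F (wickExpSum S p x)) (multivariateGaussian 0 S)) :
    Tendsto (fun k => wickExpectation (G k) S p) atTop (nhds (wickExpectation F S p)) := by
  refine integral_tendsto_of_tendsto_of_monotone (fun k => ?_) hint
    (.of_forall fun x => fun k l hkl => hmono hkl _)
    (.of_forall fun x => hlim _ (wickExpSum_pos S hp hp0 x))
  obtain ⟨L, hL⟩ := hlip k
  exact integrable_lipschitzWith_comp_wickExpSum hS hL p

theorem wickExpectation_mono (hF : ConvexOn ℝ (Set.Ici 0) F)
    (hgrowth : ∃ (C : ℝ) (N : ℕ), ∀ x : ℝ, 0 ≤ x → |F x| ≤ C * (1 + x ^ N))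
    (hA : A.PosSemidef) (hB : B.PosSemidef) (hAB : ∀ i j, A i j ≤ B i j) (hp : ∀ i, 0 ≤ p i) :
    wickExpectation F A p ≤ wickExpectation F B p := by
  rcases eq_or_ne p 0 with rfl | hp0
  · rw [wickExpectation_zero, wickExpectation_zero]
  obtain ⟨G, hmono, hconv, hlip, hlim⟩ :=
    exists_monotone_seq_convexOn_lipschitzWith hF (by simp)
  rw [interior_Ici] at hlim
  have tendsto_G {S : Matrix ι ι ℝ} (hS : S.PosSemidef) :=
    tendsto_wickExpectation_of_monotone hmono hlip hlim hS hp hp0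
      (integrable_convexOn_comp_wickExpSum hF hgrowth hS hp hp0)
  refine le_of_tendsto_of_tendsto' (tendsto_G hA) (tendsto_G hB) fun k => ?_
  obtain ⟨L, hL⟩ := hlip k
  exact wickExpectation_mono_of_lipschitzWith hL (hconv k) hA hB hAB hp

end Expectation

section GaussianFamily

variable {Ω : Type*} [MeasurableSpace Ω] {P : Measure Ω}

namespace IsCenteredGaussian

variable {Z : Ω → ℝ}

lemma hasGaussianLaw (hZ : IsCenteredGaussian P Z) : HasGaussianLaw Z P := by
  obtain ⟨v, hv⟩ := hZ
  exact ⟨hv ▸ inferInstance⟩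

lemma integral_eq_zero (hZ : IsCenteredGaussian P Z) : P[Z] = 0 := by
  have haem := hZ.hasGaussianLaw.aemeasurable
  obtain ⟨v, hv⟩ := hZ
  rw [← integral_id_gaussianReal (μ := 0) (v := v), ← hv, integral_map haem (by fun_prop)]

lemma charFun_map_one (hZ : IsCenteredGaussian P Z) :
    charFun (P.map Z) 1 = Complex.exp (-(∫ ω, Z ω ^ 2 ∂P) / 2) := by
  have hlaw := hZ.hasGaussianLaw
  rw [hlaw.map_eq_gaussianReal, charFun_gaussianReal, hZ.integral_eq_zero,
    variance_of_integral_eq_zero hlaw.aemeasurable hZ.integral_eq_zero,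
    Real.coe_toNNReal _ (integral_nonneg fun ω => sq_nonneg (Z ω))]
  simp [neg_div]

end IsCenteredGaussian

/-- The Gram matrix `E[Y i * Y j]` of a family of random variables, which is the covariance matrix
when the family is centered. -/
def secondMomentMatrix {ι : Type*} (P : Measure Ω) (Y : ι → Ω → ℝ) : Matrix ι ι ℝ :=
  Matrix.of fun i j => ∫ ω, Y i ω * Y j ω ∂P

lemma dotProduct_secondMomentMatrix_mulVec {ι : Type*} [Fintype ι] {Y : ι → Ω → ℝ}
    (hY : ∀ i, MemLp (Y i) 2 P) (c : ι → ℝ) :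
    c ⬝ᵥ secondMomentMatrix P Y *ᵥ c = ∫ ω, (∑ i, c i * Y i ω) ^ 2 ∂P := by
  have hint (i j : ι) : Integrable (fun ω => c i * Y i ω * (c j * Y j ω)) P :=
    ((hY i).const_mul (c i)).integrable_mul ((hY j).const_mul (c j))
  simp only [sq, Finset.sum_mul_sum]
  rw [integral_finsetSum _ fun i _ => integrable_finsetSum _ fun j _ => hint i j]
  simp only [integral_finsetSum _ fun j _ => hint _ j, secondMomentMatrix, dotProduct,
    Matrix.mulVec, Matrix.of_apply, Finset.mul_sum]
  refine Finset.sum_congr rfl fun i _ => Finset.sum_congr rfl fun j _ => ?_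
  rw [← integral_mul_const, ← integral_const_mul]
  exact integral_congr_ae (.of_forall fun ω => by ring)

lemma posSemidef_secondMomentMatrix {ι : Type*} [Finite ι] {Y : ι → Ω → ℝ}
    (hY : ∀ i, MemLp (Y i) 2 P) : (secondMomentMatrix P Y).PosSemidef := by
  cases nonempty_fintype ι
  refine .of_dotProduct_mulVec_nonneg ?_ fun c => ?_
  · ext i j
    simp only [secondMomentMatrix, Matrix.conjTranspose_apply, Matrix.of_apply, star_trivial,
      mul_comm]
  · rw [star_trivial, dotProduct_secondMomentMatrix_mulVec hY]
    exact integral_nonneg fun ω => sq_nonneg _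

namespace IsCenteredGaussianFamily

variable {ι : Type*} {Y : ι → Ω → ℝ}

lemma isCenteredGaussian (hY : IsCenteredGaussianFamily P Y) (i : ι) :
    IsCenteredGaussian P (Y i) := by
  simpa using hY 1 (fun _ => i) 1

lemma isCenteredGaussian_sum [Fintype ι] (hY : IsCenteredGaussianFamily P Y) (c : ι → ℝ) :
    IsCenteredGaussian P fun ω => ∑ i, c i * Y i ω := by
  let e := (Fintype.equivFin ι).symm
  have hsum (ω : Ω) : ∑ i, c i * Y i ω = ∑ k, (c ∘ e) k * Y (e k) ω :=
    (e.sum_comp fun i => c i * Y i ω).symm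
  simpa only [hsum] using hY _ e (c ∘ e)

lemma isProbabilityMeasure (hY : IsCenteredGaussianFamily P Y) : IsProbabilityMeasure P :=
  (hY 0 Fin.elim0 0).hasGaussianLaw.isProbabilityMeasure

lemma memLp_two (hY : IsCenteredGaussianFamily P Y) (i : ι) : MemLp (Y i) 2 P :=
  (hY.isCenteredGaussian i).hasGaussianLaw.memLp_two

lemma aemeasurable_toLp [Countable ι] (hY : IsCenteredGaussianFamily P Y) :
    AEMeasurable (fun ω => WithLp.toLp 2 fun i => Y i ω) P :=
  (WithLp.measurable_toLp 2 _).comp_aemeasurable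
    (aemeasurable_pi_lambda _ fun i => (hY.isCenteredGaussian i).hasGaussianLaw.aemeasurable)

variable [Fintype ι] [DecidableEq ι]

lemma map_toLp_eq_multivariateGaussian (hY : IsCenteredGaussianFamily P Y) :
    P.map (fun ω => WithLp.toLp 2 fun i => Y i ω) =
      multivariateGaussian 0 (secondMomentMatrix P Y) := by
  have := hY.isProbabilityMeasure
  have := Measure.isProbabilityMeasure_map hY.aemeasurable_toLp
  refine Measure.ext_of_charFun (funext fun t => ?_)
  have hsum := hY.isCenteredGaussian_sum t
  have charFun_sum := hsum.charFun_map_one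
  rw [charFun_apply, integral_map hsum.hasGaussianLaw.aemeasurable (by fun_prop)] at charFun_sum
  rw [charFun_multivariateGaussian (posSemidef_secondMomentMatrix hY.memLp_two),
    dotProduct_secondMomentMatrix_mulVec hY.memLp_two, charFun_apply,
    integral_map hY.aemeasurable_toLp (by fun_prop)]
  simpa [PiLp.inner_apply, neg_div] using charFun_sum

lemma integral_comp_sum_exp_eq_wickExpectation (hY : IsCenteredGaussianFamily P Y) {F : ℝ → ℝ}
    (hF : ConvexOn ℝ (Set.Ici 0) F) {p : ι → ℝ} (hp : ∀ i, 0 ≤ p i) :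
    ∫ ω, F (∑ i, p i * Real.exp (Y i ω - (∫ ω', Y i ω' ^ 2 ∂P) / 2)) ∂P =
      wickExpectation F (secondMomentMatrix P Y) p := by
  have := hY.isProbabilityMeasure
  rcases eq_or_ne p 0 with rfl | hp0
  · simp [wickExpectation_zero]
  have hcont := continuous_convexOn_comp_wickExpSum (secondMomentMatrix P Y) hF hp hp0
  rw [wickExpectation, ← hY.map_toLp_eq_multivariateGaussian,
    integral_map hY.aemeasurable_toLp hcont.aestronglyMeasurable]
  simp only [wickExpSum, wickExp, secondMomentMatrix, Matrix.of_apply, sq]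

end IsCenteredGaussianFamily

end GaussianFamily

section Comparison

variable {Ω Ω' ι : Type*} [MeasurableSpace Ω] [MeasurableSpace Ω'] [Fintype ι]
  {P : Measure Ω} {P' : Measure Ω'} {A : ι → Ω → ℝ} {B : ι → Ω' → ℝ} {p : ι → ℝ} {F : ℝ → ℝ}

lemma integral_convexOn_comp_sum_exp_le (hA : IsCenteredGaussianFamily P A)
    (hB : IsCenteredGaussianFamily P' B)
    (hcov : ∀ i j, ∫ ω, A i ω * A j ω ∂P ≤ ∫ ω, B i ω * B j ω ∂P') (hp : ∀ i, 0 ≤ p i)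
    (hF : ConvexOn ℝ (Set.Ici 0) F)
    (hgrowth : ∃ (C : ℝ) (N : ℕ), ∀ x : ℝ, 0 ≤ x → |F x| ≤ C * (1 + x ^ N)) :
    ∫ ω, F (∑ i, p i * Real.exp (A i ω - (∫ ω', A i ω' ^ 2 ∂P) / 2)) ∂P ≤
      ∫ ω, F (∑ i, p i * Real.exp (B i ω - (∫ ω', B i ω' ^ 2 ∂P') / 2)) ∂P' := by
  classical
  rw [hA.integral_comp_sum_exp_eq_wickExpectation hF hp,
    hB.integral_comp_sum_exp_eq_wickExpectation hF hp]
  exact wickExpectation_mono hF hgrowth (posSemidef_secondMomentMatrix hA.memLp_two)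
    (posSemidef_secondMomentMatrix hB.memLp_two) hcov hp

theorem kahane_convexity_inequalities_general (hA : IsCenteredGaussianFamily P A)
    (hB : IsCenteredGaussianFamily P' B)
    (hcov : ∀ i j, ∫ ω, A i ω * A j ω ∂P ≤ ∫ ω, B i ω * B j ω ∂P') (hp : ∀ i, 0 ≤ p i) :
    (∀ F : ℝ → ℝ, ConvexOn ℝ (Set.Ici 0) F →
      (∃ (C : ℝ) (N : ℕ), ∀ x : ℝ, 0 ≤ x → |F x| ≤ C * (1 + x ^ N)) →
      ∫ ω, F (∑ i, p i * Real.exp (A i ω - (∫ ω', (A i ω') ^ 2 ∂P) / 2)) ∂P ≤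
        ∫ ω, F (∑ i, p i * Real.exp (B i ω - (∫ ω', (B i ω') ^ 2 ∂P') / 2)) ∂P') ∧
    (∀ F : ℝ → ℝ, ConcaveOn ℝ (Set.Ici 0) F →
      (∃ (C : ℝ) (N : ℕ), ∀ x : ℝ, 0 ≤ x → |F x| ≤ C * (1 + x ^ N)) →
      ∫ ω, F (∑ i, p i * Real.exp (B i ω - (∫ ω', (B i ω') ^ 2 ∂P') / 2)) ∂P' ≤
        ∫ ω, F (∑ i, p i * Real.exp (A i ω - (∫ ω', (A i ω') ^ 2 ∂P) / 2)) ∂P) := by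
  refine ⟨fun F hF hgrowth => integral_convexOn_comp_sum_exp_le hA hB hcov hp hF hgrowth,
    fun F hF hgrowth => ?_⟩
  have neg_le := integral_convexOn_comp_sum_exp_le hA hB hcov hp hF.neg
    (by simpa only [Pi.neg_apply, abs_neg] using hgrowth)
  simpa only [Pi.neg_apply, integral_neg, neg_le_neg_iff] using neg_le

end Comparison

/-- **Kahane's convexity inequalities.** If `(A_i)` and `(B_i)` are centered Gaussian vectors
with `E[A_i A_j] ≤ E[B_i B_j]`, then for all nonnegative weights `p_i` and every convex
function `F : [0,∞) → ℝ` of at most polynomial growth,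
`E[F(Σ p_i e^{A_i − E[A_i²]/2})] ≤ E[F(Σ p_i e^{B_i − E[B_i²]/2})]`,
and the reverse inequality for concave `F`. -/
theorem kahane_convexity_inequalities
    {Ω : Type*} [MeasurableSpace Ω] (P : Measure Ω) [IsProbabilityMeasure P]
    (n : ℕ) (hn : 1 ≤ n)
    (A B : Fin n → Ω → ℝ)
    (hAmeas : ∀ i, Measurable (A i)) (hBmeas : ∀ i, Measurable (B i))
    (hAgauss : IsCenteredGaussianFamily P A)
    (hBgauss : IsCenteredGaussianFamily P B)
    (hcov : ∀ i j, ∫ ω, A i ω * A j ω ∂P ≤ ∫ ω, B i ω * B j ω ∂P)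
    (p : Fin n → ℝ) (hp : ∀ i, 0 ≤ p i) :
    (∀ F : ℝ → ℝ, ConvexOn ℝ (Set.Ici 0) F →
      (∃ (C : ℝ) (N : ℕ), ∀ x : ℝ, 0 ≤ x → |F x| ≤ C * (1 + x ^ N)) →
      ∫ ω, F (∑ i, p i * Real.exp (A i ω - (∫ ω', (A i ω') ^ 2 ∂P) / 2)) ∂P ≤
        ∫ ω, F (∑ i, p i * Real.exp (B i ω - (∫ ω', (B i ω') ^ 2 ∂P) / 2)) ∂P) ∧
    (∀ F : ℝ → ℝ, ConcaveOn ℝ (Set.Ici 0) F →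
      (∃ (C : ℝ) (N : ℕ), ∀ x : ℝ, 0 ≤ x → |F x| ≤ C * (1 + x ^ N)) →
      ∫ ω, F (∑ i, p i * Real.exp (B i ω - (∫ ω', (B i ω') ^ 2 ∂P) / 2)) ∂P ≤
        ∫ ω, F (∑ i, p i * Real.exp (A i ω - (∫ ω', (A i ω') ^ 2 ∂P) / 2)) ∂P) :=
  kahane_convexity_inequalities_general hAgauss hBgauss hcov hp
end
end

section
/- σ-positive type of the truncated logarithmic kernel in dimension at most 2: Let d ∈ {1,2} and T > 0. Then there exists a sequence (K_k)_{k≥1} of continuous functions K_k : ℝ^d × ℝ^d → [0,∞), each positive semidefinite (i.e. Σ_{i,j} c_i c_j K_k(x_i,x_j) ≥ 0 for all finite families x_1,…,x_m ∈ ℝ^d and c_1,…,c_m ∈ ℝ), such that Σ_{k=1}^∞ K_k(x,y) = ln₊(T/|x−y|) for all x ≠ y in ℝ^d, and Σ_{k=1}^∞ K_k(x,x) = +∞ for all x. -/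
open MeasureTheory Filter

noncomputable section

/-!
With `c = (1 - √(|x - y| / T))₊` one has `ln₊ (T / |x - y|) = -2 ln (1 - c) = ∑ₖ 2 cᵏ⁺¹ / (k + 1)`,
and the series diverges at `c = 1`. By the Schur product theorem it therefore suffices that
`(1 - √|x - y|)₊` is positive semidefinite on the plane, which follows from the nonnegativity of
its Fourier transform (the easy half of Bochner's theorem, by Gaussian regularization). In polar
coordinates this transform is `∫₀¹ (1 - √r) r J₀(ρ r) dr` up to a positive factor, and an
integration by parts turns it into a positive multiple of `F ρ = ∫₀^ρ √s J₁(s) ds`. Finally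
`u = F' = √s J₁(s)` solves `u'' = -(1 - 3 / (4 s²)) u`, whose coefficient increases; hence the
energy `2 F u' - u² + (1 - 3 / (4 s²)) F²` increases from `0`, while at a zero of `F` it would be
`-u² ≤ 0`.
-/

section PosSemidef

open Real Topology FourierTransform Matrix
open scoped ComplexOrder InnerProductSpace

variable {X : Type*}

lemma posSemidef_mul_star {R : Type*} [CommRing R] [PartialOrder R] [StarRing R]
    [StarOrderedRing R] (a : X → R) : (Matrix.of fun x y ↦ a x * star (a y)).PosSemidef := by
  refine ⟨?_, fun c ↦ ?_⟩
  · ext x y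
    simp [mul_comm]
  · have hsq : (c.sum fun x cx ↦ c.sum fun y cy ↦ star cx * (a x * star (a y)) * cy) =
        (c.sum fun x cx ↦ star cx * a x) * star (c.sum fun x cx ↦ star cx * a x) := by
      simp only [Finsupp.sum, star_sum, Finset.sum_mul_sum, star_mul, star_star]
      exact Finset.sum_congr rfl fun x _ ↦ Finset.sum_congr rfl fun y _ ↦ by ring
    exact hsq ▸ mul_star_self_nonneg _

lemma posSemidef_of_tendsto {𝕜 ι : Type*} [RCLike 𝕜] {l : Filter ι} [l.NeBot]
    {A : ι → Matrix X X 𝕜} {B : Matrix X X 𝕜} (hA : ∀ᶠ t in l, (A t).PosSemidef)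
    (hlim : ∀ x y, Tendsto (fun t ↦ A t x y) l (𝓝 (B x y))) : B.PosSemidef := by
  refine ⟨?_, fun c ↦ ?_⟩
  · ext x y
    refine tendsto_nhds_unique ((hlim y x).star) ((hlim x y).congr' ?_)
    filter_upwards [hA] with t ht using (ht.isHermitian.apply x y).symm
  · refine ge_of_tendsto (tendsto_finsetSum _ fun x _ ↦ tendsto_finsetSum _ fun y _ ↦
      ((hlim x y).const_mul _).mul_const _) ?_
    filter_upwards [hA] with t ht using ht.2 c

lemma posSemidef_integral {𝕜 Ω : Type*} [RCLike 𝕜] [MeasurableSpace Ω] {μ : Measure Ω}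
    {A : Ω → Matrix X X 𝕜} (hA : ∀ ω, (A ω).PosSemidef)
    (hint : ∀ x y, Integrable (fun ω ↦ A ω x y) μ) :
    (Matrix.of fun x y ↦ ∫ ω, A ω x y ∂μ).PosSemidef := by
  refine ⟨?_, fun c ↦ ?_⟩
  · ext x y
    simp only [conjTranspose_apply, of_apply, RCLike.star_def, ← integral_conj]
    exact integral_congr_ae (.of_forall fun ω ↦ (hA ω).isHermitian.apply x y)
  · have hterm : ∀ x y, Integrable (fun ω ↦ star (c x) * A ω x y * c y) μ := fun x y ↦
      ((hint x y).const_mul _).mul_const _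
    have hsum : (c.sum fun x cx ↦ c.sum fun y cy ↦ star cx * (∫ ω, A ω x y ∂μ) * cy) =
        ∫ ω, c.sum fun x cx ↦ c.sum fun y cy ↦ star cx * A ω x y * cy ∂μ := by
      simp only [Finsupp.sum, ← integral_const_mul, ← integral_mul_const]
      rw [integral_finsetSum _ fun x _ ↦ integrable_finsetSum _ fun y _ ↦ hterm x y]
      exact Finset.sum_congr rfl fun x _ ↦ (integral_finsetSum _ fun y _ ↦ hterm x y).symm
    exact hsum ▸ integral_nonneg fun ω ↦ (hA ω).2 c

lemma posSemidef_of_posSemidef_map_ofReal {A : Matrix X X ℝ}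
    (hA : (A.map Complex.ofReal).PosSemidef) : A.PosSemidef := by
  refine ⟨?_, fun c ↦ ?_⟩
  · ext x y
    simpa using hA.isHermitian.apply x y
  · have h := hA.2 (c.mapRange Complex.ofReal Complex.ofReal_zero)
    simp only [Finsupp.sum, Finsupp.support_mapRange_of_injective _ _ Complex.ofReal_injective,
      Finsupp.mapRange_apply, map_apply, RCLike.star_def, Complex.conj_ofReal] at h
    simpa only [Finsupp.sum, star_trivial] using mod_cast h

lemma posSemidef_pow {K : X → X → ℝ} (hK : (Matrix.of K).PosSemidef) (k : ℕ) :
    (Matrix.of fun x y ↦ K x y ^ (k + 1)).PosSemidef := by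
  induction k with
  | zero => simpa using hK
  | succ k ih =>
    simp only [pow_succ _ (k + 1)]
    exact ih.hadamard hK

lemma sum_mul_mul_nonneg_of_posSemidef {K : X → X → ℝ} (hK : (Matrix.of K).PosSemidef)
    {ι : Type*} [Fintype ι] (x : ι → X) (c : ι → ℝ) :
    0 ≤ ∑ i, ∑ j, c i * c j * K (x i) (x j) := by
  have h := (hK.submatrix x).dotProduct_mulVec_nonneg c
  simp only [dotProduct, mulVec, Finset.mul_sum, submatrix_apply, of_apply, star_trivial] at h
  simpa only [mul_assoc, mul_comm, mul_left_comm] using h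

variable {V : Type*} [NormedAddCommGroup V] [InnerProductSpace ℝ V]

/-- The plane wave `w ↦ exp (2πi⟪v, w⟫)` damped by the Gaussian `exp (-‖w‖² / t)`; the damping
disappears as `t → ∞`. -/
def gaussianCharacter (t : ℝ) (v w : V) : ℂ :=
  Complex.exp (-(t : ℂ)⁻¹ * ‖w‖ ^ 2 + 2 * π * Complex.I * ⟪v, w⟫_ℝ)

lemma posSemidef_gaussianCharacter_sub (t : ℝ) (w : V) :
    (Matrix.of fun x y ↦ gaussianCharacter t (x - y) w).PosSemidef := by
  have hdamping : (0 : ℂ) ≤ Real.exp (-t⁻¹ * ‖w‖ ^ 2) := mod_cast Real.exp_nonneg _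
  have hsplit : (Matrix.of fun x y ↦ gaussianCharacter t (x - y) w) =
      (Real.exp (-t⁻¹ * ‖w‖ ^ 2) : ℂ) • Matrix.of fun x y ↦
        Complex.exp (2 * π * Complex.I * ⟪x, w⟫_ℝ) *
          star (Complex.exp (2 * π * Complex.I * ⟪y, w⟫_ℝ)) := by
    ext x y
    simp only [gaussianCharacter, Matrix.smul_apply, of_apply, smul_eq_mul, RCLike.star_def,
      ← Complex.exp_conj, Complex.ofReal_exp, ← Complex.exp_add, inner_sub_left]
    congr 1
    simp only [neg_mul, Complex.ofReal_sub, Complex.ofReal_neg, Complex.ofReal_mul,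
      Complex.ofReal_inv, Complex.ofReal_pow, map_mul, map_ofNat, Complex.conj_ofReal,
      Complex.conj_I, mul_neg, add_right_inj]
    ring
  exact hsplit ▸ (posSemidef_mul_star _).smul hdamping

variable [FiniteDimensional ℝ V] [MeasurableSpace V] [BorelSpace V] {f : V → ℂ}

lemma integrable_gaussianCharacter {t : ℝ} (ht : 0 < t) (v : V) :
    Integrable (gaussianCharacter t v) :=
  GaussianFourier.integrable_cexp_neg_mul_sq_norm_add (by simpa) _ _

lemma integrable_gaussianCharacter_mul_fourier (hf : Integrable f) {t : ℝ} (ht : 0 < t)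
    (v : V) : Integrable fun w ↦ gaussianCharacter t v w * 𝓕 f w := by
  have hcont : Continuous (𝓕 f) :=
    VectorFourier.fourierIntegral_continuous Real.continuous_fourierChar
      (by exact continuous_inner) hf
  exact (integrable_gaussianCharacter ht v).mul_bdd hcont.aestronglyMeasurable
    (.of_forall fun w ↦ VectorFourier.norm_fourierIntegral_le_integral_norm _ _ _ _ w)

lemma tendsto_integral_gaussianCharacter_mul_fourier (hf : Integrable f) {v : V}
    (hv : ContinuousAt f v) :
    Tendsto (fun t : ℝ ↦ ∫ w, gaussianCharacter t v w * 𝓕 f w) atTop (𝓝 (f v)) := by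
  refine (Real.tendsto_integral_gaussian_smul' hf hv).congr' ?_
  filter_upwards [Ioi_mem_atTop 0] with t (ht : 0 < t)
  have hparseval := VectorFourier.integral_fourierIntegral_smul_eq_flip (L := innerₗ V)
    Real.continuous_fourierChar continuous_inner (integrable_gaussianCharacter ht v) hf
  rw [flip_innerₗ] at hparseval
  refine Eq.trans (integral_congr_ae (.of_forall fun w ↦ ?_)) hparseval
  change _ = 𝓕 (gaussianCharacter t v) w • f w
  unfold gaussianCharacter
  rw [fourier_gaussian_innerProductSpace' (by simpa)]
  simp only [div_inv_eq_mul, neg_mul]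
  ring_nf

theorem posSemidef_sub_of_fourier_nonneg (hf : Integrable f) (hcont : Continuous f)
    (hpos : ∀ w, 0 ≤ 𝓕 f w) : (Matrix.of fun x y ↦ f (x - y)).PosSemidef := by
  refine posSemidef_of_tendsto (l := atTop)
    (A := fun t : ℝ ↦ Matrix.of fun x y ↦ ∫ w, gaussianCharacter t (x - y) w * 𝓕 f w) ?_
    fun x y ↦ tendsto_integral_gaussianCharacter_mul_fourier hf hcont.continuousAt
  filter_upwards [Ioi_mem_atTop 0] with t (ht : 0 < t)
  refine posSemidef_integral
    (A := fun w ↦ Matrix.of fun x y ↦ gaussianCharacter t (x - y) w * 𝓕 f w) (fun w ↦ ?_)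
    fun x y ↦ integrable_gaussianCharacter_mul_fourier hf ht (x - y)
  simpa only [smul_of, Pi.smul_def, smul_eq_mul, mul_comm (𝓕 f w)] using
    (posSemidef_gaussianCharacter_sub t w).smul (hpos w)

end PosSemidef

section Sturm

open Topology Set

/-- The energy `2Fv - u² + qF²` of a solution of `F' = u`, `u' = v`, `v' = -q u`; its derivative
is `q' F²`, which is nonnegative when `q` increases. -/
def sturmEnergy (F u v q : ℝ → ℝ) (x : ℝ) : ℝ := 2 * F x * v x - u x ^ 2 + q x * F x ^ 2

variable {F u v q q' : ℝ → ℝ}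

lemma hasDerivAt_sturmEnergy {x q'x : ℝ} (hF : HasDerivAt F (u x) x) (hu : HasDerivAt u (v x) x)
    (hv : HasDerivAt v (-q x * u x) x) (hq : HasDerivAt q q'x x) :
    HasDerivAt (sturmEnergy F u v q) (q'x * F x ^ 2) x := by
  refine (((hF.const_mul 2).mul hv).sub (hu.pow 2)).add (hq.mul (hF.pow 2)) |>.congr_deriv ?_
  simp only [Pi.pow_apply]
  ring

lemma nonneg_of_monotoneOn_of_tendsto_zero {E : ℝ → ℝ} (hE : MonotoneOn E (Ioi 0))
    (hlim : Tendsto E (𝓝[>] 0) (𝓝 0)) {x : ℝ} (hx : 0 < x) : 0 ≤ E x := by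
  refine le_of_tendsto hlim ?_
  filter_upwards [Ioc_mem_nhdsGT hx] with y hy using hE hy.1 hx hy.2

lemma sturmEnergy_pos (hF : ∀ x > 0, HasDerivAt F (u x) x) (hu : ∀ x > 0, HasDerivAt u (v x) x)
    (hv : ∀ x > 0, HasDerivAt v (-q x * u x) x) (hq : ∀ x > 0, HasDerivAt q (q' x) x)
    (hq' : ∀ x > 0, 0 < q' x) (hlim : Tendsto (sturmEnergy F u v q) (𝓝[>] 0) (𝓝 0))
    (hpos : ∀ᶠ x in 𝓝[>] 0, 0 < F x) {x : ℝ} (hx : 0 < x) : 0 < sturmEnergy F u v q x := by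
  have hderiv (y : ℝ) (hy : 0 < y) : HasDerivAt (sturmEnergy F u v q) (q' y * F y ^ 2) y :=
    hasDerivAt_sturmEnergy (hF y hy) (hu y hy) (hv y hy) (hq y hy)
  have hcont : ContinuousOn (sturmEnergy F u v q) (Ioi 0) :=
    fun y hy ↦ (hderiv y hy).continuousAt.continuousWithinAt
  have hmono : MonotoneOn (sturmEnergy F u v q) (Ioi 0) := by
    refine monotoneOn_of_hasDerivWithinAt_nonneg (convex_Ioi 0) hcont
      (fun y hy ↦ (hderiv y (interior_subset hy)).hasDerivWithinAt) fun y hy ↦ ?_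
    exact mul_nonneg (hq' y (interior_subset hy)).le (sq_nonneg _)
  obtain ⟨b, hb : 0 < b, hFb⟩ := mem_nhdsGT_iff_exists_Ioc_subset.1 hpos
  set a := min x b
  have ha : 0 < a := lt_min hx hb
  have hstrict : StrictMonoOn (sturmEnergy F u v q) (Icc (a / 2) a) := by
    have hIcc : Icc (a / 2) a ⊆ Ioi 0 := fun y hy ↦ (half_pos ha).trans_le hy.1
    refine strictMonoOn_of_hasDerivWithinAt_pos (convex_Icc _ _) (hcont.mono hIcc)
      (fun y hy ↦ (hderiv y (hIcc (interior_subset hy))).hasDerivWithinAt) fun y hy ↦ ?_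
    have hy := interior_subset hy
    exact mul_pos (hq' y (hIcc hy))
      (pow_pos (hFb ⟨hIcc hy, hy.2.trans (min_le_right x b)⟩) 2)
  calc 0 ≤ sturmEnergy F u v q (a / 2) :=
        nonneg_of_monotoneOn_of_tendsto_zero hmono hlim (half_pos ha)
    _ < sturmEnergy F u v q a :=
        hstrict ⟨le_rfl, by linarith⟩ ⟨by linarith, le_rfl⟩ (half_lt_self ha)
    _ ≤ sturmEnergy F u v q x := hmono ha hx (min_le_left x b)

theorem pos_of_sturmEnergy_tendsto_zero (hF : ∀ x > 0, HasDerivAt F (u x) x)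
    (hu : ∀ x > 0, HasDerivAt u (v x) x) (hv : ∀ x > 0, HasDerivAt v (-q x * u x) x)
    (hq : ∀ x > 0, HasDerivAt q (q' x) x) (hq' : ∀ x > 0, 0 < q' x)
    (hlim : Tendsto (sturmEnergy F u v q) (𝓝[>] 0) (𝓝 0)) (hpos : ∀ᶠ x in 𝓝[>] 0, 0 < F x)
    {x : ℝ} (hx : 0 < x) : 0 < F x := by
  by_contra! hFx
  obtain ⟨y, hFy, hyx⟩ := (hpos.and (Ioc_mem_nhdsGT hx)).exists
  obtain ⟨z, hz, hFz⟩ := intermediate_value_Icc' hyx.2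
    (fun z hz ↦ (hF z (hyx.1.trans_le hz.1)).continuousAt.continuousWithinAt) ⟨hFx, hFy.le⟩
  have henergy := sturmEnergy_pos hF hu hv hq hq' hlim hpos (hyx.1.trans_le hz.1)
  simp only [sturmEnergy, hFz] at henergy
  linarith [sq_nonneg (u z)]

end Sturm

section Bessel

open Real Topology

lemma hasDerivAt_integral_mul_comp_mul {a φ h h' : ℝ → ℝ} (ha : Continuous a) (hφ : Continuous φ)
    (hh : ∀ x, HasDerivAt h (h' x) x) (hh' : Continuous h') {C : ℝ} (hC : ∀ x, |h' x| ≤ C)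
    (α β z : ℝ) :
    HasDerivAt (fun z ↦ ∫ θ in α..β, a θ * h (z * φ θ))
      (∫ θ in α..β, a θ * (φ θ * h' (z * φ θ))) z := by
  have hcont : Continuous h := continuous_iff_continuousAt.2 fun x ↦ (hh x).continuousAt
  refine (intervalIntegral.hasDerivAt_integral_of_dominated_loc_of_deriv_le (s := Set.univ)
    (F' := fun z θ ↦ a θ * (φ θ * h' (z * φ θ)))
    (bound := fun θ ↦ |a θ * φ θ| * C) univ_mem
    (.of_forall fun x ↦ Continuous.aestronglyMeasurable (by fun_prop))
    (Continuous.intervalIntegrable (by fun_prop) _ _)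
    (Continuous.aestronglyMeasurable (by fun_prop)) (.of_forall fun θ _ x _ ↦ ?_)
    (Continuous.intervalIntegrable (by fun_prop) _ _) (.of_forall fun θ _ x _ ↦ ?_)).2
  · rw [← mul_assoc, norm_mul]
    exact mul_le_mul_of_nonneg_left (hC _) (norm_nonneg _)
  · exact (((hh _).comp x (hasDerivAt_mul_const (φ θ))).const_mul (a θ)).congr_deriv (by ring)

/-- The Bessel function of the first kind of order `0`, through Bessel's integral. -/
def besselJ₀ (z : ℝ) : ℝ := (2 * π)⁻¹ * ∫ θ in (-π)..π, cos (z * cos θ)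

/-- The Bessel function of the first kind of order `1`, through Bessel's integral. -/
def besselJ₁ (z : ℝ) : ℝ := (2 * π)⁻¹ * ∫ θ in (-π)..π, cos θ * sin (z * cos θ)

lemma besselJ₀_zero : besselJ₀ 0 = 1 := by
  simp only [besselJ₀, zero_mul, cos_zero, intervalIntegral.integral_const, smul_eq_mul]
  field_simp
  ring

lemma besselJ₁_zero : besselJ₁ 0 = 0 := by simp [besselJ₁]

lemma hasDerivAt_besselJ₀ (z : ℝ) : HasDerivAt besselJ₀ (-besselJ₁ z) z := by
  have h := hasDerivAt_integral_mul_comp_mul (a := 1) continuous_const continuous_cos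
    hasDerivAt_cos (by fun_prop) (C := 1) (by simpa using abs_sin_le_one) (-π) π z
  simp only [Pi.one_apply, one_mul, mul_neg, intervalIntegral.integral_neg] at h
  exact (h.const_mul (2 * π)⁻¹).congr_deriv (mul_neg _ _)

lemma hasDerivAt_besselJ₁_integral (z : ℝ) :
    HasDerivAt besselJ₁ ((2 * π)⁻¹ * ∫ θ in (-π)..π, cos θ ^ 2 * cos (z * cos θ)) z := by
  have h := hasDerivAt_integral_mul_comp_mul continuous_cos continuous_cos hasDerivAt_sin
    continuous_cos abs_cos_le_one (-π) π z
  simp only [sq, mul_assoc]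
  exact h.const_mul (2 * π)⁻¹

lemma mul_integral_cos_sq_mul_cos (z : ℝ) :
    z * ∫ θ in (-π)..π, cos θ ^ 2 * cos (z * cos θ) =
      (z * ∫ θ in (-π)..π, cos (z * cos θ)) - ∫ θ in (-π)..π, cos θ * sin (z * cos θ) := by
  have hderiv (θ : ℝ) : HasDerivAt (fun θ ↦ sin θ * sin (z * cos θ))
      (cos θ * sin (z * cos θ) - z * cos (z * cos θ) + z * (cos θ ^ 2 * cos (z * cos θ))) θ := by
    refine ((hasDerivAt_sin θ).mul ((hasDerivAt_cos θ).const_mul z).sin).congr_deriv ?_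
    rw [cos_sq']
    ring
  have hzero := intervalIntegral.integral_eq_sub_of_hasDerivAt (a := -π) (b := π)
    (fun θ _ ↦ hderiv θ) (Continuous.intervalIntegrable (by fun_prop) _ _)
  rw [intervalIntegral.integral_add, intervalIntegral.integral_sub,
    intervalIntegral.integral_const_mul, intervalIntegral.integral_const_mul] at hzero
  · simp only [sin_pi, sin_neg, neg_zero, zero_mul, sub_zero] at hzero
    linarith
  all_goals exact Continuous.intervalIntegrable (by fun_prop) _ _

lemma hasDerivAt_besselJ₁ {z : ℝ} (hz : z ≠ 0) :
    HasDerivAt besselJ₁ (besselJ₀ z - besselJ₁ z / z) z := by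
  refine (hasDerivAt_besselJ₁_integral z).congr_deriv ?_
  rw [besselJ₀, besselJ₁, mul_div_assoc, ← mul_sub]
  congr 1
  rw [← mul_right_inj' hz, mul_integral_cos_sq_mul_cos, mul_sub, mul_div_cancel₀ _ hz]

@[fun_prop]
lemma continuous_besselJ₀ : Continuous besselJ₀ :=
  continuous_iff_continuousAt.2 fun z ↦ (hasDerivAt_besselJ₀ z).continuousAt

@[fun_prop]
lemma continuous_besselJ₁ : Continuous besselJ₁ :=
  continuous_iff_continuousAt.2 fun z ↦ (hasDerivAt_besselJ₁_integral z).continuousAt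

lemma besselJ₁_pos {z : ℝ} (hz : 0 < z) (hzπ : z < π) : 0 < besselJ₁ z := by
  have hpi := pi_pos
  have hnonneg (c : ℝ) (hc : |c| ≤ 1) : 0 ≤ c * sin (z * c) := by
    obtain ⟨hc₁, hc₂⟩ := abs_le.1 hc
    rcases le_total 0 c with h | h
    · exact mul_nonneg h (sin_nonneg_of_nonneg_of_le_pi (by positivity) (by nlinarith))
    · exact mul_nonneg_of_nonpos_of_nonpos h
        (sin_nonpos_of_nonpos_of_neg_pi_le (by nlinarith) (by nlinarith))
  refine mul_pos (by positivity) (intervalIntegral.integral_pos (by linarith) (by fun_prop)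
    (fun θ _ ↦ hnonneg _ (abs_cos_le_one θ)) ⟨0, ⟨by linarith, hpi.le⟩, ?_⟩)
  simpa using sin_pos_of_pos_of_lt_pi hz hzπ

lemma hasDerivAt_integral_sqrt_mul_besselJ₁ (x : ℝ) :
    HasDerivAt (fun x ↦ ∫ s in 0..x, √s * besselJ₁ s) (√x * besselJ₁ x) x := by
  have hcont : Continuous fun s ↦ √s * besselJ₁ s := by fun_prop
  exact (hcont.integral_hasStrictDerivAt 0 x).hasDerivAt

lemma hasDerivAt_sqrt_mul_besselJ₁ {x : ℝ} (hx : 0 < x) :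
    HasDerivAt (fun x ↦ √x * besselJ₁ x) (√x * besselJ₀ x - besselJ₁ x / (2 * √x)) x := by
  refine ((hasDerivAt_sqrt hx.ne').mul (hasDerivAt_besselJ₁ hx.ne')).congr_deriv ?_
  generalize besselJ₀ x = j₀, besselJ₁ x = j₁
  obtain ⟨p, hp, rfl⟩ : ∃ p, 0 < p ∧ x = p ^ 2 := ⟨√x, sqrt_pos.2 hx, (sq_sqrt hx.le).symm⟩
  rw [sqrt_sq hp.le]
  field_simp
  ring

lemma hasDerivAt_deriv_sqrt_mul_besselJ₁ {x : ℝ} (hx : 0 < x) :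
    HasDerivAt (fun x ↦ √x * besselJ₀ x - besselJ₁ x / (2 * √x))
      (-(1 - 3 / (4 * x ^ 2)) * (√x * besselJ₁ x)) x := by
  have hs : 0 < √x := sqrt_pos.2 hx
  have hsqrt := hasDerivAt_sqrt hx.ne'
  refine ((hsqrt.mul (hasDerivAt_besselJ₀ x)).sub ((hasDerivAt_besselJ₁ hx.ne').div
    (hsqrt.const_mul 2) (by positivity))).congr_deriv ?_
  generalize besselJ₀ x = j₀, besselJ₁ x = j₁
  obtain ⟨p, hp, rfl⟩ : ∃ p, 0 < p ∧ x = p ^ 2 := ⟨√x, hs, (sq_sqrt hx.le).symm⟩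
  rw [sqrt_sq hp.le]
  field_simp
  ring

lemma hasDerivAt_one_sub_div_sq {x : ℝ} (hx : 0 < x) :
    HasDerivAt (fun x : ℝ ↦ 1 - 3 / (4 * x ^ 2)) (3 / (2 * x ^ 3)) x := by
  refine (((hasDerivAt_const x 3).fun_div ((hasDerivAt_pow 2 x).const_mul 4)
    (by positivity)).const_sub 1).congr_deriv ?_
  field_simp
  ring

lemma tendsto_sqrt_nhdsGT_zero : Tendsto (√·) (𝓝[>] 0) (𝓝 0) := by
  simpa using (continuous_sqrt.tendsto 0).mono_left nhdsWithin_le_nhds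

lemma tendsto_besselJ₁_div_sqrt : Tendsto (fun x ↦ besselJ₁ x / √x) (𝓝[>] 0) (𝓝 0) := by
  have hslope := (hasDerivAt_besselJ₁_integral 0).tendsto_slope_zero_right
  refine (mul_zero (_ : ℝ) ▸ hslope.mul tendsto_sqrt_nhdsGT_zero).congr' ?_
  filter_upwards [self_mem_nhdsWithin] with x (hx : 0 < x)
  rw [zero_add, besselJ₁_zero, sub_zero, smul_eq_mul, eq_div_iff (sqrt_pos.2 hx).ne', mul_assoc,
    mul_self_sqrt hx.le, inv_mul_eq_div, div_mul_cancel₀ _ hx.ne']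

lemma tendsto_integral_sqrt_mul_besselJ₁_div :
    Tendsto (fun x ↦ (∫ s in 0..x, √s * besselJ₁ s) / x) (𝓝[>] 0) (𝓝 0) := by
  have hslope := (hasDerivAt_integral_sqrt_mul_besselJ₁ 0).tendsto_slope_zero_right
  simpa [inv_mul_eq_div] using hslope

lemma tendsto_sturmEnergy_bessel :
    Tendsto (sturmEnergy (fun x ↦ ∫ s in 0..x, √s * besselJ₁ s) (fun x ↦ √x * besselJ₁ x)
      (fun x ↦ √x * besselJ₀ x - besselJ₁ x / (2 * √x)) fun x ↦ 1 - 3 / (4 * x ^ 2))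
      (𝓝[>] 0) (𝓝 0) := by
  have hF : Tendsto (fun x ↦ ∫ s in 0..x, √s * besselJ₁ s) (𝓝[>] 0) (𝓝 0) := by
    simpa using (hasDerivAt_integral_sqrt_mul_besselJ₁ 0).continuousAt.tendsto.mono_left
      nhdsWithin_le_nhds
  have hJ₀ := (continuous_besselJ₀.tendsto 0).mono_left (nhdsWithin_le_nhds (s := Set.Ioi 0))
  have hJ₁ := (continuous_besselJ₁.tendsto 0).mono_left (nhdsWithin_le_nhds (s := Set.Ioi 0))
  have hu := tendsto_sqrt_nhdsGT_zero.mul hJ₁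
  have hv := (tendsto_sqrt_nhdsGT_zero.mul hJ₀).sub (tendsto_besselJ₁_div_sqrt.div_const 2)
  have hqF := (hF.pow 2).sub ((tendsto_integral_sqrt_mul_besselJ₁_div.pow 2).const_mul (3 / 4))
  have hlim := (((hF.const_mul 2).mul hv).sub (hu.pow 2)).add hqF
  convert hlim using 2 with x
  · rw [sturmEnergy]
    ring
  · simp

theorem integral_sqrt_mul_besselJ₁_pos {x : ℝ} (hx : 0 < x) :
    0 < ∫ s in 0..x, √s * besselJ₁ s := by
  refine pos_of_sturmEnergy_tendsto_zero (fun x _ ↦ hasDerivAt_integral_sqrt_mul_besselJ₁ x)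
    (fun _ ↦ hasDerivAt_sqrt_mul_besselJ₁) (fun _ ↦ hasDerivAt_deriv_sqrt_mul_besselJ₁)
    (fun _ ↦ hasDerivAt_one_sub_div_sq) (fun _ _ ↦ by positivity) tendsto_sturmEnergy_bessel
    ?_ hx
  filter_upwards [Ioo_mem_nhdsGT pi_pos] with y hy
  refine intervalIntegral.intervalIntegral_pos_of_pos_on
    (Continuous.intervalIntegrable (by fun_prop) _ _) (fun s hs ↦ ?_) hy.1
  exact mul_pos (sqrt_pos.2 hs.1) (besselJ₁_pos hs.1 (hs.2.trans hy.2))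

end Bessel

section RadialFourier

open Real Set FourierTransform
open scoped InnerProductSpace

lemma integral_sin_mul_cos_eq_zero (z : ℝ) : ∫ θ in (-π)..π, sin (z * cos θ) = 0 := by
  have hperiodic : Function.Periodic (fun θ ↦ sin (z * cos θ)) (2 * π) := fun θ ↦ by simp
  have hshift : ∫ θ in (-π)..π, sin (z * cos (θ + π)) = ∫ θ in (-π)..π, sin (z * cos θ) := by
    rw [intervalIntegral.integral_comp_add_right fun θ ↦ sin (z * cos θ)]
    convert hperiodic.intervalIntegral_add_eq (-π + π) (-π) using 2 <;> ring
  simp only [cos_add_pi, mul_neg, sin_neg, intervalIntegral.integral_neg] at hshift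
  linarith

lemma integral_exp_neg_mul_cos_sub (z θ₀ : ℝ) :
    ∫ θ in (-π)..π, Complex.exp (↑(-(z * cos (θ - θ₀))) * Complex.I) = 2 * π * besselJ₀ z := by
  have hperiodic :
      Function.Periodic (fun θ ↦ Complex.exp (↑(-(z * cos θ)) * Complex.I)) (2 * π) :=
    fun θ ↦ by simp only [cos_add_two_pi]
  have hexp (θ : ℝ) : Complex.exp (↑(-(z * cos θ)) * Complex.I) =
      (cos (z * cos θ) : ℂ) - (sin (z * cos θ) : ℂ) * Complex.I := by
    rw [Complex.exp_mul_I, ← Complex.ofReal_cos, ← Complex.ofReal_sin, cos_neg, sin_neg]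
    push_cast
    ring
  calc ∫ θ in (-π)..π, Complex.exp (↑(-(z * cos (θ - θ₀))) * Complex.I)
    _ = ∫ θ in (-π)..π, Complex.exp (↑(-(z * cos θ)) * Complex.I) := by
      rw [intervalIntegral.integral_comp_sub_right
        fun θ ↦ Complex.exp (↑(-(z * cos θ)) * Complex.I)]
      convert hperiodic.intervalIntegral_add_eq (-π - θ₀) (-π) using 2 <;> ring
    _ = ∫ θ in (-π)..π, (cos (z * cos θ) : ℂ) - (sin (z * cos θ) : ℂ) * Complex.I := by
      simp only [hexp]
    _ = (∫ θ in (-π)..π, cos (z * cos θ) : ℝ) := by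
      rw [intervalIntegral.integral_sub, intervalIntegral.integral_mul_const,
        intervalIntegral.integral_ofReal, intervalIntegral.integral_ofReal,
        integral_sin_mul_cos_eq_zero, Complex.ofReal_zero, zero_mul, sub_zero]
      all_goals exact Continuous.intervalIntegrable (by fun_prop) _ _
    _ = 2 * π * besselJ₀ z := by
      rw [besselJ₀]
      push_cast
      field_simp

lemma inner_polarCoord_symm (p : ℝ × ℝ) (w : ℂ) :
    ⟪Complex.polarCoord.symm p, w⟫_ℝ = p.1 * ‖w‖ * cos (p.2 - Complex.arg w) := by
  rw [Complex.polarCoord_symm_apply, Complex.inner, cos_sub]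
  simp only [Complex.mul_re, Complex.conj_re, Complex.conj_im, Complex.mul_im, Complex.ofReal_re,
    Complex.ofReal_im, Complex.add_re, Complex.add_im, Complex.I_re, Complex.I_im]
  linear_combination (-p.1 * cos p.2) * Complex.norm_mul_cos_arg w +
    (-p.1 * sin p.2) * Complex.norm_mul_sin_arg w

lemma integrableOn_radial_mul_exp {g : ℝ → ℂ} (hg : IntegrableOn (fun r ↦ r * g r) (Ioi 0))
    (ρ θ₀ : ℝ) :
    IntegrableOn (fun p : ℝ × ℝ ↦
      p.1 * g p.1 * Complex.exp (↑(-(ρ * p.1 * cos (p.2 - θ₀))) * Complex.I))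
      (Ioi 0 ×ˢ Ioo (-π) π) (volume.prod volume) := by
  rw [IntegrableOn, ← Measure.prod_restrict]
  exact (hg.comp_fst _).mul_bdd (Continuous.aestronglyMeasurable (by fun_prop))
    (.of_forall fun p ↦ (Complex.norm_exp_ofReal_mul_I _).le)

theorem fourier_comp_norm_eq_integral_besselJ₀ {g : ℝ → ℂ}
    (hg : IntegrableOn (fun r ↦ r * g r) (Ioi 0)) (w : ℂ) :
    𝓕 (fun z : ℂ ↦ g ‖z‖) w =
      2 * π * ∫ r in Ioi (0 : ℝ), r * g r * besselJ₀ (2 * π * ‖w‖ * r) := by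
  calc 𝓕 (fun z : ℂ ↦ g ‖z‖) w
    _ = ∫ p in Ioi (0 : ℝ) ×ˢ Ioo (-π) π, p.1 * g p.1 *
        Complex.exp (↑(-(2 * π * ‖w‖ * p.1 * cos (p.2 - Complex.arg w))) * Complex.I) := by
      rw [Real.fourier_eq', ← Complex.integral_comp_polarCoord_symm]
      refine setIntegral_congr_fun (measurableSet_Ioi.prod measurableSet_Ioo) ?_
      rintro p ⟨hp : 0 < p.1, -⟩
      simp only [inner_polarCoord_symm, Complex.norm_polarCoord_symm, abs_of_pos hp,
        Complex.real_smul, smul_eq_mul]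
      ring_nf
    _ = ∫ r in Ioi (0 : ℝ), ∫ θ in Ioo (-π) π, r * g r *
        Complex.exp (↑(-(2 * π * ‖w‖ * r * cos (θ - Complex.arg w))) * Complex.I) :=
      setIntegral_prod _ (integrableOn_radial_mul_exp hg _ _)
    _ = ∫ r in Ioi (0 : ℝ), 2 * π * (r * g r * besselJ₀ (2 * π * ‖w‖ * r)) := by
      refine setIntegral_congr_fun measurableSet_Ioi fun r _ ↦ ?_
      simp only [integral_const_mul, ← integral_Ioc_eq_integral_Ioo,
        ← intervalIntegral.integral_of_le (neg_le_self pi_pos.le), integral_exp_neg_mul_cos_sub]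
      ring
    _ = 2 * π * ∫ r in Ioi (0 : ℝ), r * g r * besselJ₀ (2 * π * ‖w‖ * r) :=
      integral_const_mul _ _

lemma hasDerivAt_mul_besselJ₁_comp {ρ r : ℝ} (hρ : ρ ≠ 0) (hr : r ≠ 0) :
    HasDerivAt (fun r ↦ ρ⁻¹ * (r * besselJ₁ (ρ * r))) (r * besselJ₀ (ρ * r)) r := by
  refine (((hasDerivAt_id r).mul ((hasDerivAt_besselJ₁ (mul_ne_zero hρ hr)).comp r
    (hasDerivAt_const_mul ρ))).const_mul ρ⁻¹).congr_deriv ?_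
  simp only [id, Function.comp_apply]
  field_simp
  ring

lemma integral_one_sub_sqrt_mul_besselJ₀ {ρ : ℝ} (hρ : 0 < ρ) :
    ∫ r in (0 : ℝ)..1, (1 - √r) * (r * besselJ₀ (ρ * r)) =
      (2 * ρ ^ 2 * √ρ)⁻¹ * ∫ s in 0..ρ, √s * besselJ₁ s := by
  have hderiv (r : ℝ) (hr : r ∈ Ioo (0 : ℝ) 1) :
      HasDerivAt (fun r ↦ (1 - √r) * (ρ⁻¹ * (r * besselJ₁ (ρ * r))) +
        (2 * ρ ^ 2 * √ρ)⁻¹ * ∫ s in 0..ρ * r, √s * besselJ₁ s)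
        ((1 - √r) * (r * besselJ₀ (ρ * r))) r := by
    refine ((((hasDerivAt_sqrt hr.1.ne').const_sub 1).mul
      (hasDerivAt_mul_besselJ₁_comp hρ.ne' hr.1.ne')).add
      (((hasDerivAt_integral_sqrt_mul_besselJ₁ (ρ * r)).comp r
        (hasDerivAt_const_mul ρ)).const_mul _)).congr_deriv ?_
    rw [sqrt_mul hρ.le]
    generalize besselJ₀ (ρ * r) = j₀, besselJ₁ (ρ * r) = j₁
    obtain ⟨p, hp, rfl⟩ : ∃ p, 0 < p ∧ r = p ^ 2 :=
      ⟨√r, sqrt_pos.2 hr.1, (sq_sqrt hr.1.le).symm⟩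
    rw [sqrt_sq hp.le]
    field_simp
    ring
  have : Continuous fun x ↦ ∫ s in 0..x, √s * besselJ₁ s :=
    continuous_iff_continuousAt.2 fun x ↦ (hasDerivAt_integral_sqrt_mul_besselJ₁ x).continuousAt
  rw [intervalIntegral.integral_eq_sub_of_hasDerivAt_of_le zero_le_one
    (Continuous.continuousOn (by fun_prop)) hderiv
    (Continuous.intervalIntegrable (by fun_prop) _ _)]
  simp

lemma integral_one_sub_sqrt_mul_besselJ₀_nonneg {ρ : ℝ} (hρ : 0 ≤ ρ) :
    0 ≤ ∫ r in (0 : ℝ)..1, (1 - √r) * (r * besselJ₀ (ρ * r)) := by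
  rcases hρ.eq_or_lt with rfl | hρ
  · refine intervalIntegral.integral_nonneg zero_le_one fun r hr ↦ ?_
    rw [zero_mul, besselJ₀_zero, mul_one]
    exact mul_nonneg (sub_nonneg.2 (sqrt_le_one.2 hr.2)) hr.1
  · rw [integral_one_sub_sqrt_mul_besselJ₀ hρ]
    exact mul_nonneg (by positivity) (integral_sqrt_mul_besselJ₁_pos hρ).le

/-- The profile `(1 - √r)₊` whose powers sum to the truncated logarithm. -/
def sqrtHat (r : ℝ) : ℝ := max (1 - √r) 0

@[fun_prop]
lemma continuous_sqrtHat : Continuous sqrtHat := by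
  unfold sqrtHat
  fun_prop

lemma sqrtHat_zero : sqrtHat 0 = 1 := by simp [sqrtHat]

lemma sqrtHat_nonneg (r : ℝ) : 0 ≤ sqrtHat r := le_max_right _ _

lemma sqrtHat_of_le_one {r : ℝ} (hr : r ≤ 1) : sqrtHat r = 1 - √r :=
  max_eq_left (sub_nonneg.2 (sqrt_le_one.2 hr))

lemma sqrtHat_of_one_le {r : ℝ} (hr : 1 ≤ r) : sqrtHat r = 0 :=
  max_eq_right (sub_nonpos.2 (one_le_sqrt.2 hr))

lemma hasCompactSupport_sqrtHat_norm : HasCompactSupport fun z : ℂ ↦ sqrtHat ‖z‖ := by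
  refine .intro (isCompact_closedBall 0 1) fun z hz ↦ sqrtHat_of_one_le ?_
  simpa using (not_le.1 (mt mem_closedBall_zero_iff.2 hz)).le

lemma integrable_sqrtHat_norm : Integrable fun z : ℂ ↦ (sqrtHat ‖z‖ : ℂ) :=
  (Continuous.integrable_of_hasCompactSupport (by fun_prop)
    hasCompactSupport_sqrtHat_norm).ofReal

lemma integral_Ioi_mul_sqrtHat_mul (h : ℝ → ℝ) :
    ∫ r in Ioi 0, r * sqrtHat r * h r = ∫ r in (0 : ℝ)..1, (1 - √r) * (r * h r) := by
  rw [intervalIntegral.integral_of_le zero_le_one,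
    setIntegral_eq_of_subset_of_forall_sdiff_eq_zero measurableSet_Ioi Ioc_subset_Ioi_self]
  · refine setIntegral_congr_fun measurableSet_Ioc fun r hr ↦ ?_
    simp only [sqrtHat_of_le_one hr.2]
    ring
  · rintro r ⟨hr₀ : 0 < r, hr₁⟩
    rw [sqrtHat_of_one_le (not_le.1 fun h ↦ hr₁ ⟨hr₀, h⟩).le, mul_zero, zero_mul]

open ComplexOrder in
lemma fourier_sqrtHat_norm_nonneg (w : ℂ) : 0 ≤ 𝓕 (fun z : ℂ ↦ (sqrtHat ‖z‖ : ℂ)) w := by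
  have hradial : IntegrableOn (fun r : ℝ ↦ (r : ℂ) * sqrtHat r) (Ioi 0) := by
    simpa [Complex.finrank_real_complex] using
      (integrable_fun_norm_addHaar volume (f := fun r ↦ (sqrtHat r : ℂ))).1 integrable_sqrtHat_norm
  rw [fourier_comp_norm_eq_integral_besselJ₀ (g := fun r ↦ sqrtHat r) hradial]
  have hnonneg : 0 ≤ 2 * π * ∫ r in Ioi (0 : ℝ), r * sqrtHat r * besselJ₀ (2 * π * ‖w‖ * r) := by
    rw [integral_Ioi_mul_sqrtHat_mul]
    exact mul_nonneg (by positivity)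
      (integral_one_sub_sqrt_mul_besselJ₀_nonneg (by positivity))
  exact_mod_cast hnonneg

theorem posSemidef_sqrtHat_norm_sub :
    (Matrix.of fun x y : ℂ ↦ sqrtHat ‖x - y‖).PosSemidef :=
  posSemidef_of_posSemidef_map_ofReal (posSemidef_sub_of_fourier_nonneg integrable_sqrtHat_norm
    (by fun_prop) fourier_sqrtHat_norm_nonneg)

end RadialFourier

section LogKernel

open Real

lemma hasSum_sqrtHat_pow {r : ℝ} (hr : 0 < r) :
    HasSum (fun k : ℕ ↦ 2 / (k + 1) * sqrtHat r ^ (k + 1)) (max (log r⁻¹) 0) := by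
  rcases le_total r 1 with hr₁ | hr₁
  · have hlog : max (log r⁻¹) 0 = 2 * -log (1 - sqrtHat r) := by
      rw [sqrtHat_of_le_one hr₁, sub_sub_cancel, log_sqrt hr.le, log_inv,
        max_eq_left (neg_nonneg.2 (log_nonpos hr.le hr₁))]
      ring
    have habs : |sqrtHat r| < 1 := by
      rw [abs_of_nonneg (sqrtHat_nonneg r), sqrtHat_of_le_one hr₁]
      exact sub_lt_self 1 (sqrt_pos.2 hr)
    rw [hlog]
    exact ((hasSum_pow_div_log_of_abs_lt_one habs).mul_left 2).congr_fun fun k ↦ by ring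
  · simp [sqrtHat_of_one_le hr₁, log_nonneg hr₁]

lemma not_summable_sqrtHat_zero_pow :
    ¬ Summable fun k : ℕ ↦ 2 / (k + 1) * sqrtHat 0 ^ (k + 1) := by
  simp only [sqrtHat_zero, one_pow, mul_one, div_eq_mul_one_div (2 : ℝ)]
  rw [summable_mul_left_iff two_ne_zero]
  simpa using mt (summable_nat_add_iff 1).1 not_summable_one_div_natCast

lemma tsum_ofReal_eq_top_of_not_summable {ι : Type*} {f : ι → ℝ} (hf : ∀ i, 0 ≤ f i)
    (hdiv : ¬ Summable f) : ∑' i, ENNReal.ofReal (f i) = ⊤ := by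
  by_contra hfin
  exact hdiv (by simpa only [ENNReal.toReal_ofReal (hf _)] using ENNReal.summable_toReal hfin)

lemma nonempty_linearIsometry_of_finrank_le {𝕜 E F : Type*} [RCLike 𝕜] [NormedAddCommGroup E]
    [InnerProductSpace 𝕜 E] [FiniteDimensional 𝕜 E] [NormedAddCommGroup F]
    [InnerProductSpace 𝕜 F] [FiniteDimensional 𝕜 F]
    (h : Module.finrank 𝕜 E ≤ Module.finrank 𝕜 F) : Nonempty (E →ₗᵢ[𝕜] F) := by
  let b := stdOrthonormalBasis 𝕜 E
  let f := b.toBasis.constr 𝕜 (stdOrthonormalBasis 𝕜 F ∘ Fin.castLE h)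
  have hf : f ∘ b.toBasis = stdOrthonormalBasis 𝕜 F ∘ Fin.castLE h :=
    funext fun i ↦ b.toBasis.constr_basis 𝕜 _ i
  exact ⟨f.isometryOfOrthonormal (v := b.toBasis) (by simp [b.orthonormal])
    (hf ▸ (stdOrthonormalBasis 𝕜 F).orthonormal.comp _ (Fin.castLE_injective h))⟩

/-- The `k`-th kernel in the decomposition of `ln₊ (T / ‖x - y‖)`, obtained by writing this as
`-2 ln (1 - c)` with `c = (1 - √(‖x - y‖ / T))₊` and expanding in powers of `c`. -/
def logKernelTerm {E : Type*} [NormedAddCommGroup E] (T : ℝ) (k : ℕ) (x y : E) : ℝ :=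
  2 / (k + 1) * sqrtHat (‖x - y‖ / T) ^ (k + 1)

variable {E : Type*} [NormedAddCommGroup E] {T : ℝ}

lemma continuous_logKernelTerm (T : ℝ) (k : ℕ) :
    Continuous fun p : E × E ↦ logKernelTerm T k p.1 p.2 := by
  unfold logKernelTerm
  fun_prop

lemma logKernelTerm_nonneg (T : ℝ) (k : ℕ) (x y : E) : 0 ≤ logKernelTerm T k x y :=
  mul_nonneg (by positivity) (pow_nonneg (sqrtHat_nonneg _) _)

lemma tsum_logKernelTerm (hT : 0 < T) {x y : E} (hxy : x ≠ y) :
    ∑' k, ENNReal.ofReal (logKernelTerm T k x y) =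
      ENNReal.ofReal (max (log (T / ‖x - y‖)) 0) := by
  have hsum : HasSum (fun k ↦ logKernelTerm T k x y) (max (log (T / ‖x - y‖)) 0) := by
    simpa only [logKernelTerm, inv_div] using
      hasSum_sqrtHat_pow (div_pos (norm_pos_iff.2 (sub_ne_zero.2 hxy)) hT)
  rw [← hsum.tsum_eq,
    ENNReal.ofReal_tsum_of_nonneg (fun k ↦ logKernelTerm_nonneg T k x y) hsum.summable]

lemma tsum_logKernelTerm_self (T : ℝ) (x : E) :
    ∑' k, ENNReal.ofReal (logKernelTerm T k x x) = ⊤ := by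
  refine tsum_ofReal_eq_top_of_not_summable (fun k ↦ logKernelTerm_nonneg T k x x) ?_
  simpa only [logKernelTerm, sub_self, norm_zero, zero_div] using not_summable_sqrtHat_zero_pow

lemma posSemidef_logKernelTerm [InnerProductSpace ℝ E] [FiniteDimensional ℝ E]
    (hE : Module.finrank ℝ E ≤ 2) (hT : 0 < T) (k : ℕ) :
    (Matrix.of (logKernelTerm (E := E) T k)).PosSemidef := by
  obtain ⟨φ⟩ := nonempty_linearIsometry_of_finrank_le (𝕜 := ℝ) (E := E) (F := ℂ)
    (by rwa [Complex.finrank_real_complex])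
  have hscale (x y : E) : ‖φ (T⁻¹ • x) - φ (T⁻¹ • y)‖ = ‖x - y‖ / T := by
    rw [← map_sub, φ.norm_map, ← smul_sub, norm_smul, norm_inv, norm_of_nonneg hT.le,
      inv_mul_eq_div]
  have hhat : (Matrix.of fun x y : E ↦ sqrtHat (‖x - y‖ / T)).PosSemidef := by
    simp only [← hscale]
    exact posSemidef_sqrtHat_norm_sub.submatrix fun x : E ↦ φ (T⁻¹ • x)
  exact (posSemidef_pow hhat k).smul (by positivity : (0 : ℝ) ≤ 2 / (k + 1))

theorem lnplus_kernel_sigma_positive_general {E : Type*} [NormedAddCommGroup E]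
    [InnerProductSpace ℝ E] [FiniteDimensional ℝ E] (hE : Module.finrank ℝ E ≤ 2) {T : ℝ}
    (hT : 0 < T) :
    ∃ K : ℕ → E → E → ℝ,
      (∀ k, Continuous fun p : E × E ↦ K k p.1 p.2) ∧
      (∀ k x y, 0 ≤ K k x y) ∧
      (∀ (k m : ℕ) (x : Fin m → E) (c : Fin m → ℝ),
        0 ≤ ∑ i, ∑ j, c i * c j * K k (x i) (x j)) ∧
      (∀ x y, x ≠ y → ∑' k, ENNReal.ofReal (K k x y) =
        ENNReal.ofReal (max (log (T / ‖x - y‖)) 0)) ∧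
      ∀ x, ∑' k, ENNReal.ofReal (K k x x) = ⊤ :=
  ⟨logKernelTerm T, continuous_logKernelTerm T, logKernelTerm_nonneg T,
    fun k _ x c ↦ sum_mul_mul_nonneg_of_posSemidef (posSemidef_logKernelTerm hE hT k) x c,
    fun _ _ hxy ↦ tsum_logKernelTerm hT hxy, tsum_logKernelTerm_self T⟩

end LogKernel

/-- **σ-positive type of the truncated logarithmic kernel in dimension at most 2.**
For `d ∈ {1,2}` and `T > 0`, the kernel `(x,y) ↦ ln₊(T/|x−y|)` on `ℝ^d` is of σ-positive
type: it is the pointwise sum of a sequence of continuous, nonnegative, positive semidefinite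
kernels (summing to `+∞` on the diagonal). -/
theorem lnplus_kernel_sigma_positive
    (d : ℕ) (hd : d = 1 ∨ d = 2) (T : ℝ) (hT : 0 < T) :
    ∃ K : ℕ → EuclideanSpace ℝ (Fin d) → EuclideanSpace ℝ (Fin d) → ℝ,
      (∀ k, Continuous (fun p : EuclideanSpace ℝ (Fin d) × EuclideanSpace ℝ (Fin d) =>
        K k p.1 p.2)) ∧
      (∀ k x y, 0 ≤ K k x y) ∧
      (∀ (k m : ℕ) (x : Fin m → EuclideanSpace ℝ (Fin d)) (c : Fin m → ℝ),
        0 ≤ ∑ i, ∑ j, c i * c j * K k (x i) (x j)) ∧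
      (∀ x y : EuclideanSpace ℝ (Fin d), x ≠ y →
        (∑' k : ℕ, ENNReal.ofReal (K k x y)) =
          ENNReal.ofReal (max (Real.log (T / ‖x - y‖)) 0)) ∧
      (∀ x : EuclideanSpace ℝ (Fin d), (∑' k : ℕ, ENNReal.ofReal (K k x x)) = ⊤) := by
  exact lnplus_kernel_sigma_positive_general (by rcases hd with rfl | rfl <;> simp) hT
end
end
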